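/- arXiv:0908.1016 — 3 statements merged into one kernel-verified Lean document; each statement's English description precedes it below -/
import Mathlib

section
/- Let g be a nondegenerate symmetric bilinear form on ℝ⁴ and let G = G_g be the induced area metric. Then the Fresnel polynomial of G factorizes as a perfect square of the inverse-metric quadratic form: there exists a nonzero real constant c such that for every covector k ∈ (ℝ⁴)*, 𝒢(k,k,k,k) = c · (g^{ab} k_a k_b)². -/
noncomputable section

/-- First members of the ordered Petrov index pairs `[01],[02],[03],[12],[31],[23]`. -/
def pFst : Fin 6 → Fin 4 := ![0, 0, 0, 1, 3, 2]

/-- Second members of the ordered Petrov index pairs `[01],[02],[03],[12],[31],[23]`. -/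
def pSnd : Fin 6 → Fin 4 := ![1, 2, 3, 2, 1, 3]

/-- The Petrov matrix of a rank-4 covariant tensor on `ℝ⁴`: the symmetric `6 × 6` matrix
of components `G_{abcd}` indexed by the ordered pairs `[01],[02],[03],[12],[31],[23]`. -/
def petrov (G : Fin 4 → Fin 4 → Fin 4 → Fin 4 → ℝ) : Matrix (Fin 6) (Fin 6) ℝ :=
  Matrix.of fun A B => G (pFst A) (pSnd A) (pFst B) (pSnd B)

/-- The totally antisymmetric Levi-Civita symbol on four indices with `ε₀₁₂₃ = 1`. -/
def eps (a b c d : Fin 4) : ℝ :=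
  (Matrix.of fun i j => if (![a, b, c, d] : Fin 4 → Fin 4) i = j then (1 : ℝ) else 0).det

/-- The Petrov index associated to a pair of distinct indices (arbitrary on the diagonal). -/
def bIdx : Fin 4 → Fin 4 → Fin 6 :=
  ![![0, 0, 1, 2], ![0, 0, 3, 4], ![1, 3, 0, 5], ![2, 4, 5, 0]]

/-- The sign relating the tensor component `T_{ab}` to the Petrov component at `bIdx a b`
(`0` on the diagonal); the pair `[31]` is stored in the order `(3,1)`. -/
def bSgn : Fin 4 → Fin 4 → ℝ :=
  ![![0, 1, 1, 1], ![-1, 0, 1, -1], ![-1, -1, 0, 1], ![-1, 1, -1, 0]]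

/-- The rank-4 tensor with the area metric symmetries reconstructed from a
(symmetric) Petrov matrix. -/
def fromPetrov (M : Matrix (Fin 6) (Fin 6) ℝ) : Fin 4 → Fin 4 → Fin 4 → Fin 4 → ℝ :=
  fun a b c d => bSgn a b * bSgn c d * M (bIdx a b) (bIdx c d)

/-- The components `(G⁻¹)^{abcd}` of the inverse area metric, characterized by
`Petrov(G⁻¹) = Petrov(G)⁻¹`. -/
def ginv (G : Fin 4 → Fin 4 → Fin 4 → Fin 4 → ℝ) : Fin 4 → Fin 4 → Fin 4 → Fin 4 → ℝ :=
  fromPetrov (petrov G)⁻¹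

/-- The area metric volume form `(ω_G)_{abcd} = |det Petrov(G)|^{1/6} ε_{abcd}`. -/
def vol (G : Fin 4 → Fin 4 → Fin 4 → Fin 4 → ℝ) (a b c d : Fin 4) : ℝ :=
  |(petrov G).det| ^ ((1 : ℝ) / 6) * eps a b c d

/-- The inverse volume form `(ω_G⁻¹)^{abcd} = |det Petrov(G)|^{-1/6} ε^{abcd}`. -/
def volInv (G : Fin 4 → Fin 4 → Fin 4 → Fin 4 → ℝ) (a b c d : Fin 4) : ℝ :=
  |(petrov G).det| ^ (-(1 : ℝ) / 6) * eps a b c d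

/-- The Fresnel polynomial
`𝒢(k,k,k,k) = -(1/24)(ω_G)_{mnpq}(ω_G)_{rstu}(G⁻¹)^{mnra}(G⁻¹)^{bpsc}(G⁻¹)^{dqtu} k_a k_b k_c k_d`
(all repeated indices summed over `0,…,3`; the symmetrization over `a,b,c,d` in the Fresnel
tensor is immaterial after contraction with `k_a k_b k_c k_d`). -/
def fresnelPoly (G : Fin 4 → Fin 4 → Fin 4 → Fin 4 → ℝ) (k : Fin 4 → ℝ) : ℝ :=
  -(1 / 24) * ∑ m : Fin 4, ∑ n : Fin 4, ∑ p : Fin 4, ∑ q : Fin 4, ∑ r : Fin 4, ∑ s : Fin 4,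
      ∑ t : Fin 4, ∑ u : Fin 4, ∑ a : Fin 4, ∑ b : Fin 4, ∑ c : Fin 4, ∑ d : Fin 4,
    vol G m n p q * vol G r s t u * ginv G m n r a * ginv G b p s c * ginv G d q t u *
      k a * k b * k c * k d


/-!
Petrov matrices of induced area metrics are second compound matrices, hence multiplicative in `g`,
so the inverse of `G_g` is `G_h` with `h = g⁻¹`. Put `K = h k`, `L = k h` and `Q = k ⬝ h k`.
Contracting the three factors of the Fresnel polynomial with `k` leaves
`(h_{mr} K_n - h_{nr} K_m) (L_s K_p - Q h_{ps}) (L_t h_{qu} - L_u h_{qt})`.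
In the contraction with `ε_{mnpq}` the terms containing `K_n K_p` cancel, and Cramer's rule,
applied to columns of `h` one of which is replaced by `h k`, gives
`2 Q det h (L_t k_t + L_u k_u) ε_{rstu}`. The contraction with `ε_{rstu}` then runs over
permutations, each value of `t` occurring `3!` times, and yields `24 det h Q²`.
-/

open Equiv Matrix

section SignedSums

variable {n R : Type*} [Fintype n] [DecidableEq n] [CommRing R]

theorem sum_det_one_submatrix_mul (f : (n → n) → R) :
    ∑ v : n → n, ((1 : Matrix n n R).submatrix v id).det * f v =
      ∑ σ : Perm n, (Perm.sign σ : R) * f σ := by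
  refine (Fintype.sum_of_injective (fun σ : Perm n ↦ (σ : n → n)) DFunLike.coe_injective _ _
    (fun v hv ↦ ?_) fun σ ↦ ?_).symm
  · have hinj : ¬ Function.Injective v := fun h ↦
      hv ⟨Equiv.ofBijective v (Finite.injective_iff_bijective.mp h), rfl⟩
    obtain ⟨i, j, hv_eq, hij⟩ := Function.not_injective_iff.mp hinj
    rw [det_zero_of_row_eq hij (by ext l; simp [hv_eq, one_apply]), zero_mul]
  · rw [det_permute, det_one, mul_one]

theorem sum_sign_mul_sub_mul_swap {i j : n} (hij : i ≠ j) (f : Perm n → R) :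
    ∑ σ : Perm n, (Perm.sign σ : R) * (f σ - f (σ * swap i j)) =
      2 * ∑ σ : Perm n, (Perm.sign σ : R) * f σ := by
  have hswap : ∑ σ : Perm n, (Perm.sign σ : R) * f (σ * swap i j) =
      -∑ σ : Perm n, (Perm.sign σ : R) * f σ := by
    rw [← Finset.sum_neg_distrib]
    refine Fintype.sum_equiv (Equiv.mulRight (swap i j)) _ _ fun σ ↦ ?_
    simp [Perm.sign_mul, Perm.sign_swap hij]
  simp only [mul_sub, Finset.sum_sub_distrib, hswap]
  ring

theorem det_updateCol_mulVec (A : Matrix n n R) (v : n → R) (i : n) :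
    (A.updateCol i (A *ᵥ v)).det = A.det * v i := by
  rw [← cramer_apply, cramer_eq_adjugate_mulVec, mulVec_mulVec, adjugate_mul]
  simp [smul_mulVec]

theorem det_updateCol_submatrix_mulVec (A : Matrix n n R) (σ : Perm n) (v : n → R) (i : n) :
    ((A.submatrix id σ).updateCol i (A *ᵥ v)).det = (Perm.sign σ : R) * A.det * v (σ i) := by
  have hv : A *ᵥ v = A.submatrix id σ *ᵥ (v ∘ σ) := by
    rw [submatrix_mulVec_equiv]
    simp [Function.comp_assoc]
  rw [hv, det_updateCol_mulVec, det_permute', Function.comp_apply]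

end SignedSums

theorem sum_perm_apply {M : Type*} [AddCommMonoid M] {n : ℕ} (f : Fin (n + 1) → M)
    (i : Fin (n + 1)) :
    ∑ σ : Perm (Fin (n + 1)), f (σ i) = n.factorial • ∑ j, f j := by
  calc ∑ σ : Perm (Fin (n + 1)), f (σ i)
      = ∑ σ : Perm (Fin (n + 1)), f (σ 0) :=
        Fintype.sum_equiv (Equiv.mulRight (swap 0 i)) _ _ fun σ ↦ by simp
    _ = ∑ p : Fin (n + 1) × Perm (Fin n), f p.1 :=
        Fintype.sum_equiv Perm.decomposeFin _ _ fun σ ↦ by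
          rw [← Perm.decomposeFin_symm_apply_zero (Perm.decomposeFin σ).1 (Perm.decomposeFin σ).2]
          simp
    _ = n.factorial • ∑ j, f j := by
        simp [Fintype.sum_prod_type, Fintype.card_perm, Finset.smul_sum]

theorem sum_eq_sum_vecCons {α M : Type*} [Fintype α] [AddCommMonoid M] {n : ℕ}
    (f : (Fin (n + 1) → α) → M) : ∑ v, f v = ∑ a, ∑ w : Fin n → α, f (vecCons a w) := by
  rw [← (Fin.consEquiv fun _ ↦ α).sum_comp, Fintype.sum_prod_type]
  rfl

theorem eps_eq_det_submatrix (a b c d : Fin 4) :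
    eps a b c d = ((1 : Matrix (Fin 4) (Fin 4) ℝ).submatrix ![a, b, c, d] id).det := by
  simp only [eps, submatrix, one_apply, id]

theorem sum_eps_mul (f : Fin 4 → Fin 4 → Fin 4 → Fin 4 → ℝ) :
    ∑ a, ∑ b, ∑ c, ∑ d, eps a b c d * f a b c d =
      ∑ σ : Perm (Fin 4), (Perm.sign σ : ℝ) * f (σ 0) (σ 1) (σ 2) (σ 3) := by
  rw [← sum_det_one_submatrix_mul fun v ↦ f (v 0) (v 1) (v 2) (v 3)]
  simp only [sum_eq_sum_vecCons, Fintype.sum_unique, eps_eq_det_submatrix]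
  rfl

theorem fresnelPoly_eq_sum_perm (G : Fin 4 → Fin 4 → Fin 4 → Fin 4 → ℝ) (k : Fin 4 → ℝ) :
    fresnelPoly G k = -(1 / 24) * (|(petrov G).det| ^ ((1 : ℝ) / 6)) ^ 2 *
      ∑ τ : Perm (Fin 4), (Perm.sign τ : ℝ) * ∑ σ : Perm (Fin 4), (Perm.sign σ : ℝ) *
        ((∑ a, ginv G (σ 0) (σ 1) (τ 0) a * k a) *
          (∑ b, ∑ c, ginv G b (σ 2) (τ 1) c * k b * k c) *
          ∑ d, ginv G d (σ 3) (τ 2) (τ 3) * k d) := by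
  set V := |(petrov G).det| ^ ((1 : ℝ) / 6) with hV
  have hfactor (m n p q r s t u : Fin 4) :
      ∑ a, ∑ b, ∑ c, ∑ d, vol G m n p q * vol G r s t u * ginv G m n r a * ginv G b p s c *
          ginv G d q t u * k a * k b * k c * k d =
        eps m n p q * (eps r s t u * (V ^ 2 * ((∑ a, ginv G m n r a * k a) *
          (∑ b, ∑ c, ginv G b p s c * k b * k c) * ∑ d, ginv G d q t u * k d))) := by
    calc _ = ∑ a, ∑ b, ∑ c, ∑ d, eps m n p q * (eps r s t u * (V ^ 2 *
            (ginv G m n r a * k a * (ginv G b p s c * k b * k c) * (ginv G d q t u * k d)))) := by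
          simp only [vol, ← hV]
          iterate 4 refine Finset.sum_congr rfl fun _ _ ↦ ?_
          ring
      _ = _ := by simp only [← Finset.mul_sum, ← Finset.sum_mul]
  simp only [fresnelPoly, hfactor, ← Finset.mul_sum, sum_eps_mul]
  simp only [Finset.mul_sum (Finset.univ (α := Perm (Fin 4)))]
  rw [Finset.sum_comm]
  exact Finset.sum_congr rfl fun _ _ ↦ Finset.sum_congr rfl fun _ _ ↦ by ring

/-- The area metric `(G_g)_{abcd} = g_{ac} g_{bd} - g_{ad} g_{bc}` induced by the
bilinear form `g_{ab}`, over any ring and any index set. -/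
def inducedAreaMetric {n R : Type*} [Ring R] (g : Matrix n n R) : n → n → n → n → R :=
  fun a b c d ↦ g a c * g b d - g a d * g b c

section Contraction

variable {n R : Type*} [Fintype n] [CommRing R] (h : Matrix n n R) (k : n → R)

theorem sum_inducedAreaMetric_mul_last (a b c : n) :
    ∑ d, inducedAreaMetric h a b c d * k d = h a c * (h *ᵥ k) b - h b c * (h *ᵥ k) a := by
  simp only [inducedAreaMetric, mulVec, dotProduct, sub_mul, Finset.sum_sub_distrib,
    Finset.mul_sum]
  congr 1 <;> exact Finset.sum_congr rfl fun _ _ ↦ by ring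

theorem sum_inducedAreaMetric_mul_first (b c d : n) :
    ∑ a, inducedAreaMetric h a b c d * k a = (k ᵥ* h) c * h b d - (k ᵥ* h) d * h b c := by
  simp only [inducedAreaMetric, vecMul, dotProduct, sub_mul, Finset.sum_sub_distrib,
    Finset.sum_mul]
  congr 1 <;> exact Finset.sum_congr rfl fun _ _ ↦ by ring

theorem sum_inducedAreaMetric_mul_first_last (b c : n) :
    ∑ a, ∑ d, inducedAreaMetric h a b c d * k a * k d =
      (k ᵥ* h) c * (h *ᵥ k) b - (k ⬝ᵥ h *ᵥ k) * h b c := by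
  calc ∑ a, ∑ d, inducedAreaMetric h a b c d * k a * k d
      = ∑ a, k a * (h a c * (h *ᵥ k) b - h b c * (h *ᵥ k) a) := by
        simp only [← sum_inducedAreaMetric_mul_last, Finset.mul_sum]
        exact Finset.sum_congr rfl fun _ _ ↦ Finset.sum_congr rfl fun _ _ ↦ by ring
    _ = (k ᵥ* h) c * (h *ᵥ k) b - (k ⬝ᵥ h *ᵥ k) * h b c := by
        simp only [vecMul, dotProduct, Finset.sum_mul, ← Finset.sum_sub_distrib]
        exact Finset.sum_congr rfl fun _ _ ↦ by ring

end Contraction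

section SignedContraction

variable {R : Type*} [CommRing R]

theorem sum_sign_mul_eq_det (x y z w : Fin 4 → R) :
    ∑ σ : Perm (Fin 4), (Perm.sign σ : R) * (x (σ 0) * y (σ 1) * z (σ 2) * w (σ 3)) =
      (of ![x, y, z, w]).det := by
  rw [← det_transpose, det_apply']
  simp [Fin.prod_univ_four]

variable (h : Matrix (Fin 4) (Fin 4) R) (k : Fin 4 → R)

theorem sum_sign_mul_mulVec (τ : Perm (Fin 4)) :
    ∑ σ : Perm (Fin 4), (Perm.sign σ : R) *
        (h (σ 0) (τ 0) * (h *ᵥ k) (σ 1) * h (σ 2) (τ 1) * h (σ 3) (τ 3)) =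
      -((Perm.sign τ : R) * h.det * k (τ 2)) := by
  -- `h *ᵥ k` stands in place of column `τ 2`, which the transposition moves to position `1`.
  have hrows : of ![fun i ↦ h i (τ 0), h *ᵥ k, fun i ↦ h i (τ 1), fun i ↦ h i (τ 3)] =
      ((h.submatrix id (τ * swap (1 : Fin 4) 2 : Perm (Fin 4))).updateCol 1 (h *ᵥ k))ᵀ := by
    ext i j
    fin_cases i <;> simp [swap_apply_def]
  rw [sum_sign_mul_eq_det (fun i ↦ h i (τ 0)) (h *ᵥ k) (fun i ↦ h i (τ 1)) fun i ↦ h i (τ 3),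
    hrows, det_transpose, det_updateCol_submatrix_mulVec]
  simp [Perm.sign_mul]

theorem sum_sign_mul_sub_mul_mulVec (α β : R) (τ : Perm (Fin 4)) :
    ∑ σ : Perm (Fin 4), (Perm.sign σ : R) *
        ((h (σ 0) (τ 0) * (h *ᵥ k) (σ 1) - h (σ 1) (τ 0) * (h *ᵥ k) (σ 0)) *
          (α * (h *ᵥ k) (σ 2) - β * h (σ 2) (τ 1)) * h (σ 3) (τ 3)) =
      (Perm.sign τ : R) * (2 * β * h.det * k (τ 2)) := by
  have hrepeat : ∑ σ : Perm (Fin 4), (Perm.sign σ : R) *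
      (h (σ 0) (τ 0) * (h *ᵥ k) (σ 1) * (h *ᵥ k) (σ 2) * h (σ 3) (τ 3)) = 0 := by
    rw [sum_sign_mul_eq_det (fun i ↦ h i (τ 0)) (h *ᵥ k) (h *ᵥ k) fun i ↦ h i (τ 3)]
    exact det_zero_of_row_eq (i := 1) (j := 2) (by decide) rfl
  calc _ = 2 * ∑ σ : Perm (Fin 4), (Perm.sign σ : R) * (h (σ 0) (τ 0) * (h *ᵥ k) (σ 1) *
          (α * (h *ᵥ k) (σ 2) - β * h (σ 2) (τ 1)) * h (σ 3) (τ 3)) := by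
        rw [← sum_sign_mul_sub_mul_swap (i := (0 : Fin 4)) (j := 1) (by decide)]
        refine Finset.sum_congr rfl fun σ _ ↦ ?_
        simp only [Perm.coe_mul, Function.comp_apply, swap_apply_def, Fin.reduceEq, if_true,
          if_false]
        ring
    _ = 2 * (α * 0 - β * -((Perm.sign τ : R) * h.det * k (τ 2))) := by
        rw [← hrepeat, ← sum_sign_mul_mulVec]
        simp only [Finset.mul_sum, ← Finset.sum_sub_distrib]
        exact Finset.sum_congr rfl fun _ _ ↦ by ring
    _ = _ := by ring

theorem sum_sign_mul_sub_mul_sub (α β : R) (l : Fin 4 → R) (τ : Perm (Fin 4)) :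
    ∑ σ : Perm (Fin 4), (Perm.sign σ : R) *
        ((h (σ 0) (τ 0) * (h *ᵥ k) (σ 1) - h (σ 1) (τ 0) * (h *ᵥ k) (σ 0)) *
          (α * (h *ᵥ k) (σ 2) - β * h (σ 2) (τ 1)) *
          (l (τ 2) * h (σ 3) (τ 3) - l (τ 3) * h (σ 3) (τ 2))) =
      (Perm.sign τ : R) * (2 * β * h.det * (l (τ 2) * k (τ 2) + l (τ 3) * k (τ 3))) := by
  have hτ := sum_sign_mul_sub_mul_mulVec h k α β τ
  have hτ' : ∑ σ : Perm (Fin 4), (Perm.sign σ : R) *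
        ((h (σ 0) (τ 0) * (h *ᵥ k) (σ 1) - h (σ 1) (τ 0) * (h *ᵥ k) (σ 0)) *
          (α * (h *ᵥ k) (σ 2) - β * h (σ 2) (τ 1)) * h (σ 3) (τ 2)) =
      -((Perm.sign τ : R) * (2 * β * h.det * k (τ 3))) := by
    simpa [swap_apply_def, Perm.sign_mul, Perm.sign_swap] using
      sum_sign_mul_sub_mul_mulVec h k α β (τ * swap (2 : Fin 4) 3 : Perm (Fin 4))
  calc _ = l (τ 2) * ((Perm.sign τ : R) * (2 * β * h.det * k (τ 2))) -
          l (τ 3) * -((Perm.sign τ : R) * (2 * β * h.det * k (τ 3))) := by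
        rw [← hτ, ← hτ']
        simp only [Finset.mul_sum, ← Finset.sum_sub_distrib]
        exact Finset.sum_congr rfl fun _ _ ↦ by ring
    _ = _ := by ring

theorem sum_sign_sum_sign_inducedAreaMetric :
    ∑ τ : Perm (Fin 4), (Perm.sign τ : R) * ∑ σ : Perm (Fin 4), (Perm.sign σ : R) *
        ((∑ a, inducedAreaMetric h (σ 0) (σ 1) (τ 0) a * k a) *
          (∑ b, ∑ c, inducedAreaMetric h b (σ 2) (τ 1) c * k b * k c) *
          ∑ d, inducedAreaMetric h d (σ 3) (τ 2) (τ 3) * k d) =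
      24 * h.det * (k ⬝ᵥ h *ᵥ k) ^ 2 := by
  have hsq (τ : Perm (Fin 4)) (x : R) : (Perm.sign τ : R) * ((Perm.sign τ : R) * x) = x := by
    rcases Int.units_eq_one_or (Perm.sign τ) with hτ | hτ <;> simp [hτ]
  have hsum (i : Fin 4) :
      ∑ τ : Perm (Fin 4), (k ᵥ* h) (τ i) * k (τ i) = 6 * (k ⬝ᵥ h *ᵥ k) := by
    rw [sum_perm_apply fun j ↦ (k ᵥ* h) j * k j, dotProduct_mulVec, dotProduct]
    simp [Nat.factorial]
  simp only [sum_inducedAreaMetric_mul_last, sum_inducedAreaMetric_mul_first,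
    sum_inducedAreaMetric_mul_first_last, sum_sign_mul_sub_mul_sub, hsq, ← Finset.mul_sum,
    Finset.sum_add_distrib, hsum]
  ring

end SignedContraction

section Petrov

theorem sum_petrov_index {M : Type*} [AddCommMonoid M] (f : Fin 4 → Fin 4 → M) :
    ∑ A, f (pFst A) (pSnd A) = f 0 1 + f 0 2 + f 0 3 + f 1 2 + f 3 1 + f 2 3 := by
  simp [Fin.sum_univ_six, pFst, pSnd]

theorem petrov_inducedAreaMetric_mul (g h : Matrix (Fin 4) (Fin 4) ℝ) :
    petrov (inducedAreaMetric (g * h)) =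
      petrov (inducedAreaMetric g) * petrov (inducedAreaMetric h) := by
  ext A B
  simp only [mul_apply, petrov, of_apply]
  rw [sum_petrov_index fun a b ↦ inducedAreaMetric g (pFst A) (pSnd A) a b *
    inducedAreaMetric h a b (pFst B) (pSnd B)]
  simp only [inducedAreaMetric, mul_apply, Fin.sum_univ_four]
  ring

theorem petrov_inducedAreaMetric_one :
    petrov (inducedAreaMetric (1 : Matrix (Fin 4) (Fin 4) ℝ)) = 1 := by
  ext A B
  fin_cases A <;> fin_cases B <;> simp [petrov, inducedAreaMetric, pFst, pSnd, one_apply]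

theorem bSgn_mul_apply_pFst_pSnd {T : Fin 4 → Fin 4 → ℝ} (hT : ∀ a b, T b a = -T a b)
    (a b : Fin 4) : bSgn a b * T (pFst (bIdx a b)) (pSnd (bIdx a b)) = T a b := by
  have hpair : bSgn a b = 1 ∧ pFst (bIdx a b) = a ∧ pSnd (bIdx a b) = b ∨
      bSgn a b = -1 ∧ pFst (bIdx a b) = b ∧ pSnd (bIdx a b) = a ∨ bSgn a b = 0 ∧ a = b := by
    fin_cases a <;> fin_cases b <;> simp [bSgn, bIdx, pFst, pSnd]
  rcases hpair with ⟨hs, ha, hb⟩ | ⟨hs, hb, ha⟩ | ⟨hs, rfl⟩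
  · rw [hs, ha, hb, one_mul]
  · rw [hs, ha, hb, hT a b, neg_mul_neg, one_mul]
  · rw [hs, zero_mul, self_eq_neg.mp (hT a a)]

theorem fromPetrov_petrov {G : Fin 4 → Fin 4 → Fin 4 → Fin 4 → ℝ}
    (hfst : ∀ a b c d, G b a c d = -G a b c d) (hsnd : ∀ a b c d, G a b d c = -G a b c d) :
    fromPetrov (petrov G) = G := by
  funext a b c d
  calc fromPetrov (petrov G) a b c d
      = bSgn a b * (bSgn c d * G (pFst (bIdx a b)) (pSnd (bIdx a b))
          (pFst (bIdx c d)) (pSnd (bIdx c d))) := by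
        simp only [fromPetrov, petrov, of_apply, mul_assoc]
    _ = bSgn a b * G (pFst (bIdx a b)) (pSnd (bIdx a b)) c d := by
        rw [bSgn_mul_apply_pFst_pSnd (hsnd _ _)]
    _ = G a b c d := bSgn_mul_apply_pFst_pSnd (T := fun a b ↦ G a b c d)
        (fun a b ↦ hfst a b c d) a b

variable {g : Matrix (Fin 4) (Fin 4) ℝ}

theorem petrov_inducedAreaMetric_mul_petrov_inv (hg : IsUnit g.det) :
    petrov (inducedAreaMetric g) * petrov (inducedAreaMetric g⁻¹) = 1 := by
  rw [← petrov_inducedAreaMetric_mul, mul_nonsing_inv g hg, petrov_inducedAreaMetric_one]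

theorem ginv_inducedAreaMetric (hg : IsUnit g.det) :
    ginv (inducedAreaMetric g) = inducedAreaMetric g⁻¹ := by
  rw [ginv, inv_eq_right_inv (petrov_inducedAreaMetric_mul_petrov_inv hg)]
  exact fromPetrov_petrov (fun a b c d ↦ by simp only [inducedAreaMetric]; ring)
    fun a b c d ↦ by simp only [inducedAreaMetric]; ring

theorem det_petrov_inducedAreaMetric_ne_zero (hg : IsUnit g.det) :
    (petrov (inducedAreaMetric g)).det ≠ 0 :=
  det_ne_zero_of_right_inverse (petrov_inducedAreaMetric_mul_petrov_inv hg)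

end Petrov

theorem fresnelPoly_inducedAreaMetric {g : Matrix (Fin 4) (Fin 4) ℝ} (hg : IsUnit g.det)
    (k : Fin 4 → ℝ) :
    fresnelPoly (inducedAreaMetric g) k =
      -((|(petrov (inducedAreaMetric g)).det| ^ ((1 : ℝ) / 6)) ^ 2 * g⁻¹.det) *
        (k ⬝ᵥ g⁻¹ *ᵥ k) ^ 2 := by
  rw [fresnelPoly_eq_sum_perm, ginv_inducedAreaMetric hg, sum_sign_sum_sign_inducedAreaMetric]
  ring

theorem fresnel_of_metric_induced_area_metric_general
    (g : Matrix (Fin 4) (Fin 4) ℝ) (hg : IsUnit g.det) :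
    ∃ c : ℝ, c ≠ 0 ∧ ∀ k : Fin 4 → ℝ,
      fresnelPoly (fun a b c' d => g a c' * g b d - g a d * g b c') k
        = c * (∑ a : Fin 4, ∑ b : Fin 4, g⁻¹ a b * k a * k b) ^ 2 := by
  have hscale : |(petrov (inducedAreaMetric g)).det| ^ ((1 : ℝ) / 6) ≠ 0 :=
    (Real.rpow_pos_of_pos (abs_pos.mpr (det_petrov_inducedAreaMetric_ne_zero hg)) _).ne'
  have hdet : g⁻¹.det ≠ 0 := (isUnit_nonsing_inv_det g hg).ne_zero
  refine ⟨_, neg_ne_zero.mpr (mul_ne_zero (pow_ne_zero 2 hscale) hdet), fun k ↦ ?_⟩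
  have hquad : k ⬝ᵥ g⁻¹ *ᵥ k = ∑ a, ∑ b, g⁻¹ a b * k a * k b := by
    simp only [dotProduct, mulVec, Finset.mul_sum]
    exact Finset.sum_congr rfl fun _ _ ↦ Finset.sum_congr rfl fun _ _ ↦ by ring
  rw [← hquad]
  exact fresnelPoly_inducedAreaMetric hg k

/-- For a nondegenerate symmetric bilinear form `g` on `ℝ⁴` and the induced
area metric `G_g`, the Fresnel polynomial is a perfect square of the inverse-metric
quadratic form: there is a nonzero constant `c` with
`𝒢(k,k,k,k) = c (g^{ab}k_a k_b)²` for all covectors `k`. -/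
theorem fresnel_of_metric_induced_area_metric
    (g : Matrix (Fin 4) (Fin 4) ℝ) (hsym : g.IsSymm) (hg : IsUnit g.det) :
    ∃ c : ℝ, c ≠ 0 ∧ ∀ k : Fin 4 → ℝ,
      fresnelPoly (fun a b c' d => g a c' * g b d - g a d * g b c') k
        = c * (∑ a : Fin 4, ∑ b : Fin 4, g⁻¹ a b * k a * k b) ^ 2 :=
  fresnel_of_metric_induced_area_metric_general g hg

end
end

section
/- Let G be an area metric on ℝ⁴ with Fresnel tensor 𝒢, and let ξ ∈ (ℝ⁴)* be a covector. If the 4×4 matrix M with entries M^{ab} = (G⁻¹)^{acbd} ξ_c ξ_d (sum over c,d) has rank strictly less than 3, then 𝒢(ξ,ξ,ξ,ξ) = 0. -/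
noncomputable section

/-!
Cramer's rule for the Levi-Civita symbol `ε` lets a component `ξ_i` be moved through a contraction
with `ε`, where it saturates one index of `H` at a time. The alternating symmetries make two of the
four resulting terms vanish and the other two equal. Applied to both symbols of the Fresnel
polynomial, this turns every factor into the characteristic matrix `M^{ab} = H^{acbd} ξ_c ξ_d`:
`ξ_i ξ_j ε_{mnpq} ε_{rstu} H^{mnra} H^{bpsc} H^{dqtu} ξ_a ξ_b ξ_c ξ_d = 24 (adj M)_{ji}`.
A `4 × 4` matrix of rank less than `3` has zero adjugate, so for `ξ ≠ 0` the polynomial vanishes.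
-/

section

open Matrix Finset

section Rotate

variable {α β γ δ M : Type*} [Fintype α] [Fintype β] [Fintype γ] [Fintype δ] [AddCommMonoid M]

theorem sum_rotate₃ (F : α → β → γ → M) :
    ∑ a, ∑ b, ∑ c, F a b c = ∑ b, ∑ c, ∑ a, F a b c := by
  rw [sum_comm]
  exact sum_congr rfl fun b _ => sum_comm

theorem sum_rotate₄ (F : α → β → γ → δ → M) :
    ∑ a, ∑ b, ∑ c, ∑ d, F a b c d = ∑ b, ∑ c, ∑ d, ∑ a, F a b c d := by
  rw [sum_comm]
  exact sum_congr rfl fun b _ => sum_rotate₃ _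

end Rotate

theorem sum_mul_mul_mul {α : Type*} [Fintype α] {R : Type*} [CommSemiring R]
    (x f : α → R) (a b : R) :
    ∑ s, x s * (a * f s * b) = a * (∑ s, x s * f s) * b := by
  simp only [mul_sum, sum_mul, mul_assoc, mul_left_comm]

theorem sum_sum_mul_mul_eq_zero_of_alternating {n R : Type*} [Fintype n] [CommRing R]
    {f : n → n → R} (hself : ∀ a, f a a = 0) (hswap : ∀ a b, f a b = -f b a) (x : n → R) :
    ∑ a, ∑ b, f a b * x a * x b = 0 := by
  classical
  rw [← Fintype.sum_prod_type']
  refine sum_involution (fun ab _ => ab.swap) (fun ab _ => ?_) (fun ab _ hne heq => hne ?_)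
    (fun _ _ => mem_univ _) (fun ab _ => ab.swap_swap)
  · rw [hswap ab.1 ab.2, Prod.fst_swap, Prod.snd_swap]
    ring
  · rw [show ab.2 = ab.1 from congrArg Prod.fst heq, hself]
    ring

theorem adjugate_eq_zero_of_rank_lt {K : Type*} [Field K] {n : ℕ}
    {A : Matrix (Fin (n + 1)) (Fin (n + 1)) K} (hA : A.rank < n) : A.adjugate = 0 := by
  ext i j
  rw [adjugate_fin_succ_eq_det_submatrix, Matrix.zero_apply, mul_eq_zero]
  by_contra! h
  have hrank := rank_of_isUnit _ ((isUnit_iff_isUnit_det _).2 h.2.isUnit)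
  rw [Fintype.card_fin] at hrank
  have hle := A.rank_submatrix_le j.succAbove i.succAbove
  lia

section LeviCivita

variable {n R : Type*} [Fintype n] [DecidableEq n] [CommRing R]

variable (R) in
/-- The Levi-Civita symbol of an index tuple `f`: the sign of `f` if it is a permutation and `0`
otherwise. As a determinant, it is `eps` by `rfl` on `Fin 4` and obeys Cramer's rule. -/
def leviCivita (f : n → n) : R :=
  (of fun i j => if f i = j then (1 : R) else 0).det

theorem det_submatrix_id (A : Matrix n n R) (f : n → n) :
    (A.submatrix f id).det = leviCivita R f * A.det := by
  rw [leviCivita, ← det_mul]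
  congr 1
  ext i j
  simp [mul_apply]

theorem leviCivita_comp_perm (f : n → n) (σ : Equiv.Perm n) :
    leviCivita R (f ∘ σ) = Equiv.Perm.sign σ * leviCivita R f :=
  det_permute σ (of fun i j => if f i = j then (1 : R) else 0)

theorem leviCivita_comp_swap {i j : n} (hij : i ≠ j) (f : n → n) :
    leviCivita R (f ∘ Equiv.swap i j) = -leviCivita R f := by
  simp [leviCivita_comp_perm, Equiv.Perm.sign_swap hij]

theorem leviCivita_perm (σ : Equiv.Perm n) : leviCivita R σ = Equiv.Perm.sign σ := by
  have hone : leviCivita R (id : n → n) = 1 := by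
    simpa using (det_submatrix_id (1 : Matrix n n R) id).symm
  simpa [hone] using leviCivita_comp_perm (R := R) id σ

theorem leviCivita_eq_zero {f : n → n} (hf : ¬ f.Injective) : leviCivita R f = 0 := by
  obtain ⟨i, j, hij, hne⟩ := Function.not_injective_iff.1 hf
  exact det_zero_of_row_eq hne (by ext; simp [hij])

theorem leviCivita_sq (f : n → n) :
    leviCivita R f ^ 2 = if f.Injective then 1 else 0 := by
  split_ifs with hf
  · obtain ⟨σ, rfl⟩ : ∃ σ : Equiv.Perm n, ⇑σ = f :=
      ⟨Equiv.ofBijective f (Finite.injective_iff_bijective.1 hf), rfl⟩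
    rw [leviCivita_perm, ← Int.cast_pow, ← Units.val_pow_eq_pow_val, Int.units_sq]
    simp
  · simp [leviCivita_eq_zero hf]

theorem leviCivita_mul_apply (f : n → n) (x : n → R) (i : n) :
    leviCivita R f * x i = ∑ k, leviCivita R (Function.update f k i) * x (f k) := by
  set E : Matrix n n R := of fun i j => if f i = j then (1 : R) else 0
  have hcramer : cramer Eᵀ (Pi.single i 1) ᵥ* E = E.det • Pi.single i 1 := by
    rw [← mulVec_transpose, mulVec_cramer, det_transpose]
  have hEx : E *ᵥ x = x ∘ f := by
    ext k
    simp [E, mulVec, dotProduct]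
  have hminor (k) : cramer Eᵀ (Pi.single i 1) k = leviCivita R (Function.update f k i) := by
    rw [cramer_transpose_apply, leviCivita]
    congr 1
    ext l m
    obtain rfl | hl := eq_or_ne l k
    · simp [Pi.single_apply, eq_comm]
    · simp [E, hl]
  calc leviCivita R f * x i = (E.det • Pi.single i 1) ⬝ᵥ x := by simp [leviCivita, E]
    _ = cramer Eᵀ (Pi.single i 1) ⬝ᵥ E *ᵥ x := by rw [← hcramer, dotProduct_mulVec]
    _ = ∑ k, leviCivita R (Function.update f k i) * x (f k) := by
      simp only [hEx, dotProduct, hminor, Function.comp_apply]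

theorem det_of_update_eq_sum (A : n → n → R) (k : n) (x : n → R) :
    det (of (Function.update A k x)) =
      ∑ r, x r * det (of (Function.update A k (Pi.single r 1))) := by
  have hupdate (r : n) : updateRow (of (Function.update A k x)) k (Pi.single r 1) =
      of (Function.update A k (Pi.single r 1)) := congrArg of (Function.update_idem ..)
  simpa [adjugate_apply, hupdate] using
    det_eq_sum_mul_adjugate_row (of (Function.update A k x)) k

end LeviCivita

section Four

variable {R : Type*} [CommRing R]

theorem leviCivita_swap₀₁ (m n p q : Fin 4) :
    leviCivita R ![n, m, p, q] = -leviCivita R ![m, n, p, q] := by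
  rw [← leviCivita_comp_swap (show (0 : Fin 4) ≠ 1 by decide)]
  congr 1
  ext k
  fin_cases k <;> rfl

theorem leviCivita_swap₁₂ (m n p q : Fin 4) :
    leviCivita R ![m, p, n, q] = -leviCivita R ![m, n, p, q] := by
  rw [← leviCivita_comp_swap (show (1 : Fin 4) ≠ 2 by decide)]
  congr 1
  ext k
  fin_cases k <;> rfl

theorem leviCivita_swap₂₃ (m n p q : Fin 4) :
    leviCivita R ![m, n, q, p] = -leviCivita R ![m, n, p, q] := by
  rw [← leviCivita_comp_swap (show (2 : Fin 4) ≠ 3 by decide)]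
  congr 1
  ext k
  fin_cases k <;> rfl

theorem update_vec4 {α : Type*} (a b c d v : α) :
    Function.update ![a, b, c, d] 0 v = ![v, b, c, d] ∧
    Function.update ![a, b, c, d] 1 v = ![a, v, c, d] ∧
    Function.update ![a, b, c, d] 2 v = ![a, b, v, d] ∧
    Function.update ![a, b, c, d] 3 v = ![a, b, c, v] := by
  refine ⟨?_, ?_, ?_, ?_⟩ <;> (ext k; fin_cases k <;> rfl)

theorem mul_sum_leviCivita_mul (x : Fin 4 → R) (T : Fin 4 → Fin 4 → Fin 4 → Fin 4 → R)
    (i : Fin 4) :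
    x i * ∑ m, ∑ n, ∑ p, ∑ q, leviCivita R ![m, n, p, q] * T m n p q =
      (∑ n, ∑ p, ∑ q, leviCivita R ![i, n, p, q] * ∑ m, x m * T m n p q) +
      (∑ m, ∑ p, ∑ q, leviCivita R ![m, i, p, q] * ∑ n, x n * T m n p q) +
      (∑ m, ∑ n, ∑ q, leviCivita R ![m, n, i, q] * ∑ p, x p * T m n p q) +
      ∑ m, ∑ n, ∑ p, leviCivita R ![m, n, p, i] * ∑ q, x q * T m n p q := by
  have hexchange (m n p q) : x i * (leviCivita R ![m, n, p, q] * T m n p q) =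
      leviCivita R ![i, n, p, q] * (x m * T m n p q) +
      leviCivita R ![m, i, p, q] * (x n * T m n p q) +
      leviCivita R ![m, n, i, q] * (x p * T m n p q) +
      leviCivita R ![m, n, p, i] * (x q * T m n p q) := by
    have h := leviCivita_mul_apply ![m, n, p, q] x i
    simp only [Fin.sum_univ_four, update_vec4, Matrix.cons_val] at h
    linear_combination T m n p q * h
  simp only [mul_sum, hexchange, sum_add_distrib]
  rw [sum_rotate₄, sum_congr rfl fun m _ => sum_rotate₃ (F := fun n p q =>
    leviCivita R ![m, i, p, q] * (x n * T m n p q)),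
    sum_congr rfl fun m _ => sum_congr rfl fun n _ => sum_comm (f := fun p q =>
    leviCivita R ![m, n, i, q] * (x p * T m n p q))]

theorem det_single_eq_sum_leviCivita (x y z : Fin 4 → R) (j : Fin 4) :
    det (of ![Pi.single j 1, x, y, z]) =
      ∑ r, ∑ s, ∑ u, leviCivita R ![j, r, s, u] * (x r * y s * z u) := by
  have hbasis (r s u) : det (of ![Pi.single j 1, Pi.single r 1, Pi.single s 1, Pi.single u 1]) =
      leviCivita R ![j, r, s, u] := by
    rw [leviCivita]
    congr 1
    ext k l
    fin_cases k <;> simp [Pi.single_apply, eq_comm]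
  have hrow1 := det_of_update_eq_sum ![Pi.single j 1, x, y, z] 1 x
  have hrow2 (r : Fin 4) := det_of_update_eq_sum ![Pi.single j 1, Pi.single r 1, y, z] 2 y
  have hrow3 (r s : Fin 4) :=
    det_of_update_eq_sum ![Pi.single j 1, Pi.single r 1, Pi.single s 1, z] 3 z
  simp only [update_vec4] at hrow1 hrow2 hrow3
  simp only [hrow1, hrow2, hrow3, hbasis, mul_sum]
  refine sum_congr rfl fun r _ => sum_congr rfl fun s _ => sum_congr rfl fun u _ => ?_
  ring

theorem sum_leviCivita_sq (i : Fin 4) :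
    ∑ n, ∑ p, ∑ q, leviCivita R ![i, n, p, q] ^ 2 = 6 := by
  have hcount : ∀ i : Fin 4,
      ∑ n, ∑ p, ∑ q, (if ![i, n, p, q].Injective then 1 else 0) = 6 := by
    decide
  simp only [leviCivita_sq]
  exact_mod_cast congrArg (Nat.cast : ℕ → R) (hcount i)

theorem sum_leviCivita_mul_det (M : Matrix (Fin 4) (Fin 4) R) (i j : Fin 4) :
    ∑ n, ∑ p, ∑ q, leviCivita R ![i, n, p, q] * det (of ![Pi.single j 1, M n, M p, M q]) =
      6 * M.adjugate j i := by
  have hterm (n p q : Fin 4) :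
      leviCivita R ![i, n, p, q] * det (of ![Pi.single j 1, M n, M p, M q]) =
        leviCivita R ![i, n, p, q] ^ 2 * M.adjugate j i := by
    by_cases hf : ![i, n, p, q].Injective
    · have hne : n ≠ i ∧ p ≠ i ∧ q ≠ i :=
        ⟨hf.ne (show (1 : Fin 4) ≠ 0 by decide), hf.ne (show (2 : Fin 4) ≠ 0 by decide),
          hf.ne (show (3 : Fin 4) ≠ 0 by decide)⟩
      have hrows : of ![Pi.single j 1, M n, M p, M q] =
          (M.updateRow i (Pi.single j 1)).submatrix ![i, n, p, q] id := by
        ext k l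
        fin_cases k <;> simp [hne]
      rw [hrows, det_submatrix_id, adjugate_apply]
      ring
    · simp [leviCivita_eq_zero hf]
  simp only [hterm, ← sum_mul, sum_leviCivita_sq]

variable (R) in
/-- The contraction `T ↦ ε_{mnpq} T^{mnpq}` of a rank-4 tensor with the Levi-Civita symbol. -/
def leviCivitaContraction : (Fin 4 → Fin 4 → Fin 4 → Fin 4 → R) →ₗ[R] R where
  toFun T := ∑ m, ∑ n, ∑ p, ∑ q, leviCivita R ![m, n, p, q] * T m n p q
  map_add' S T := by simp only [Pi.add_apply, mul_add, sum_add_distrib]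
  map_smul' c T := by
    simp only [Pi.smul_apply, smul_eq_mul, mul_sum, RingHom.id_apply, mul_left_comm]

theorem leviCivitaContraction_apply (T : Fin 4 → Fin 4 → Fin 4 → Fin 4 → R) :
    leviCivitaContraction R T =
      ∑ m, ∑ n, ∑ p, ∑ q, leviCivita R ![m, n, p, q] * T m n p q := rfl

theorem sum_mul_leviCivitaContraction {α : Type*} [Fintype α] (x : α → R)
    (F : α → Fin 4 → Fin 4 → Fin 4 → Fin 4 → R) :
    ∑ a, x a * leviCivitaContraction R (F a) =
      leviCivitaContraction R fun m n p q => ∑ a, x a * F a m n p q := by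
  simp_rw [← smul_eq_mul, ← map_smul, ← map_sum]
  congr 1
  ext m n p q
  simp

section Antisymmetric

variable {x : Fin 4 → R} {T : Fin 4 → Fin 4 → Fin 4 → Fin 4 → R}

theorem mul_leviCivitaContraction_of_antisymm_fst (hswap : ∀ m n p q, T m n p q = -T n m p q)
    (h₂ : ∀ m n q, ∑ p, x p * T m n p q = 0) (h₃ : ∀ m n p, ∑ q, x q * T m n p q = 0)
    (i : Fin 4) :
    x i * leviCivitaContraction R T =
      2 * ∑ n, ∑ p, ∑ q, leviCivita R ![i, n, p, q] * ∑ m, x m * T m n p q := by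
  have hsecond (m p q : Fin 4) :
      leviCivita R ![m, i, p, q] * ∑ n, x n * T m n p q =
        leviCivita R ![i, m, p, q] * ∑ n, x n * T n m p q := by
    simp only [hswap m, mul_neg, sum_neg_distrib, leviCivita_swap₀₁ i m, neg_mul, neg_neg]
  rw [leviCivitaContraction_apply, mul_sum_leviCivita_mul]
  simp only [hsecond, h₂, h₃, mul_zero, sum_const_zero, add_zero, two_mul]

theorem mul_leviCivitaContraction_of_antisymm_snd (hswap : ∀ m n p q, T m n p q = -T m n q p)
    (h₀ : ∀ n p q, ∑ m, x m * T m n p q = 0) (h₁ : ∀ m p q, ∑ n, x n * T m n p q = 0)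
    (i : Fin 4) :
    x i * leviCivitaContraction R T =
      2 * ∑ m, ∑ n, ∑ q, leviCivita R ![i, m, n, q] * ∑ p, x p * T m n p q := by
  have hthird (m n q : Fin 4) : leviCivita R ![m, n, i, q] = leviCivita R ![i, m, n, q] := by
    rw [leviCivita_swap₁₂ m i, leviCivita_swap₀₁ i m, neg_neg]
  have hfourth (m n p : Fin 4) :
      leviCivita R ![m, n, p, i] * ∑ q, x q * T m n p q =
        leviCivita R ![i, m, n, p] * ∑ q, x q * T m n q p := by
    simp only [leviCivita_swap₂₃ m n i, hthird, hswap m n p, mul_neg, sum_neg_distrib,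
      neg_mul, neg_neg]
  rw [leviCivitaContraction_apply, mul_sum_leviCivita_mul]
  simp only [hthird, hfourth, h₀, h₁, mul_zero, sum_const_zero, zero_add, two_mul]

end Antisymmetric

end Four

section DoubleBivector

variable {ι R : Type*} [CommRing R]

/-- Rank-4 tensors alternating in the first and in the second pair of indices, but not
necessarily symmetric under exchange of the pairs. The vanishing of the repeated-index components
is required separately because `2` may be a zero divisor in `R`. -/
structure IsDoubleBivector (H : ι → ι → ι → ι → R) : Prop where
  fst_self : ∀ a c d, H a a c d = 0
  fst_swap : ∀ a b c d, H a b c d = -H b a c d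
  snd_self : ∀ a b c, H a b c c = 0
  snd_swap : ∀ a b c d, H a b c d = -H a b d c

variable [Fintype ι]

/-- The matrix `H^{acbd} ξ_c ξ_d` of a double bivector `H` and a covector `ξ`. -/
def characteristicMatrix (H : ι → ι → ι → ι → R) (ξ : ι → R) : Matrix ι ι R :=
  of fun a b => ∑ c, ∑ d, H a c b d * ξ c * ξ d

/-- The contraction `H^{dqtu} ξ_d` of a covector with the first index. -/
def contractFirst (H : ι → ι → ι → ι → R) (ξ : ι → R) (q t u : ι) : R :=
  ∑ d, H d q t u * ξ d

/-- The contraction `H^{mnra} ξ_a` of a covector with the last index. -/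
def contractLast (H : ι → ι → ι → ι → R) (ξ : ι → R) (m n r : ι) : R :=
  ∑ a, H m n r a * ξ a

/-- The quartic form `ε_{mnpq} ε_{rstu} H^{mnra} H^{bpsc} H^{dqtu} ξ_a ξ_b ξ_c ξ_d`, which is the
Fresnel polynomial up to the scalar `-1/24` and the density weight of the volume form. -/
def fresnelQuartic (H : Fin 4 → Fin 4 → Fin 4 → Fin 4 → R) (ξ : Fin 4 → R) : R :=
  ∑ m, ∑ n, ∑ p, ∑ q, ∑ r, ∑ s, ∑ t, ∑ u, ∑ a, ∑ b, ∑ c, ∑ d,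
    leviCivita R ![m, n, p, q] * leviCivita R ![r, s, t, u] *
      H m n r a * H b p s c * H d q t u * ξ a * ξ b * ξ c * ξ d

namespace IsDoubleBivector

section Contraction

variable {H : ι → ι → ι → ι → R} (hH : IsDoubleBivector H) (ξ : ι → R)

include hH

theorem sum_mul_characteristicMatrix_right (a : ι) :
    ∑ b, ξ b * characteristicMatrix H ξ a b = 0 := by
  have hinner (c : ι) : ∑ b, ∑ d, H a c b d * ξ b * ξ d = 0 :=
    sum_sum_mul_mul_eq_zero_of_alternating (hH.snd_self a c) (hH.snd_swap a c) ξ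
  calc ∑ b, ξ b * characteristicMatrix H ξ a b
    _ = ∑ c, ξ c * ∑ b, ∑ d, H a c b d * ξ b * ξ d := by
      simp only [characteristicMatrix, of_apply, mul_sum]
      rw [sum_comm]
      congr! 3
      ring
    _ = 0 := by simp [hinner]

theorem sum_mul_characteristicMatrix_left (b : ι) :
    ∑ a, ξ a * characteristicMatrix H ξ a b = 0 := by
  have hinner (d : ι) : ∑ a, ∑ c, H a c b d * ξ a * ξ c = 0 :=
    sum_sum_mul_mul_eq_zero_of_alternating (fun a => hH.fst_self a b d)
      (fun a c => hH.fst_swap a c b d) ξ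
  calc ∑ a, ξ a * characteristicMatrix H ξ a b
    _ = ∑ d, ξ d * ∑ a, ∑ c, H a c b d * ξ a * ξ c := by
      simp only [characteristicMatrix, of_apply, mul_sum]
      rw [← sum_rotate₃]
      congr! 3
      ring
    _ = 0 := by simp [hinner]

theorem sum_sum_mul_eq_neg_characteristicMatrix (p s : ι) :
    ∑ b, ∑ c, H b p s c * ξ b * ξ c = -characteristicMatrix H ξ p s := by
  simp only [characteristicMatrix, of_apply, hH.fst_swap p, neg_mul, sum_neg_distrib, neg_neg]

theorem contractLast_swap (m n r : ι) :
    contractLast H ξ m n r = -contractLast H ξ n m r := by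
  simp only [contractLast, hH.fst_swap m n, neg_mul, sum_neg_distrib]

theorem contractFirst_swap (q t u : ι) :
    contractFirst H ξ q t u = -contractFirst H ξ q u t := by
  simp only [contractFirst, hH.snd_swap _ q t, neg_mul, sum_neg_distrib]

theorem sum_mul_contractLast (n r : ι) :
    ∑ m, ξ m * contractLast H ξ m n r = -characteristicMatrix H ξ n r := by
  rw [← hH.sum_sum_mul_eq_neg_characteristicMatrix]
  simp only [contractLast, mul_sum]
  congr! 2
  ring

theorem sum_mul_contractFirst_fst (t u : ι) : ∑ q, ξ q * contractFirst H ξ q t u = 0 := by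
  rw [← sum_sum_mul_mul_eq_zero_of_alternating (fun q => hH.fst_self q t u)
    (fun q d => hH.fst_swap q d t u) ξ, sum_comm]
  simp only [contractFirst, mul_sum]
  congr! 2
  ring

theorem sum_mul_contractFirst_snd (q u : ι) :
    ∑ t, ξ t * contractFirst H ξ q t u = characteristicMatrix H ξ q u := by
  simp only [contractFirst, characteristicMatrix, of_apply, mul_sum]
  rw [sum_comm]
  congr! 2 with d _ t
  rw [hH.fst_swap, hH.snd_swap]
  ring

end Contraction

section Fresnel

variable {H : Fin 4 → Fin 4 → Fin 4 → Fin 4 → R} (hH : IsDoubleBivector H) (ξ : Fin 4 → R)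

include hH

theorem fresnelQuartic_eq :
    fresnelQuartic H ξ = -leviCivitaContraction R fun m n p q =>
      leviCivitaContraction R fun r s t u =>
        contractLast H ξ m n r * characteristicMatrix H ξ p s * contractFirst H ξ q t u := by
  have hfactor (e : R) (f g : Fin 4 → R) (h : Fin 4 → Fin 4 → R) :
      ∑ a, ∑ b, ∑ c, ∑ d, e * f a * h b c * g d * ξ a * ξ b * ξ c * ξ d =
        e * ((∑ a, f a * ξ a) * (∑ b, ∑ c, h b c * ξ b * ξ c) * ∑ d, g d * ξ d) := by
    simp only [sum_mul, mul_sum]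
    rw [sum_rotate₄, sum_rotate₄, sum_rotate₄]
    refine sum_congr rfl fun d _ => ?_
    rw [sum_rotate₃]
    congr! 3
    ring
  have hterm (m n p q r s t u : Fin 4) :
      ∑ a, ∑ b, ∑ c, ∑ d, leviCivita R ![m, n, p, q] * leviCivita R ![r, s, t, u] *
          H m n r a * H b p s c * H d q t u * ξ a * ξ b * ξ c * ξ d =
        -(leviCivita R ![m, n, p, q] * (leviCivita R ![r, s, t, u] *
          (contractLast H ξ m n r * characteristicMatrix H ξ p s * contractFirst H ξ q t u))) := by
    rw [hfactor, hH.sum_sum_mul_eq_neg_characteristicMatrix, contractLast, contractFirst]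
    ring
  simp only [fresnelQuartic, hterm, leviCivitaContraction_apply, sum_neg_distrib, ← mul_sum]

theorem mul_leviCivitaContraction_eq_det (j n p q : Fin 4) :
    ξ j * leviCivitaContraction R (fun r s t u =>
      characteristicMatrix H ξ n r * characteristicMatrix H ξ p s * contractFirst H ξ q t u) =
      2 * det (of ![Pi.single j 1, characteristicMatrix H ξ n, characteristicMatrix H ξ p,
        characteristicMatrix H ξ q]) := by
  rw [mul_leviCivitaContraction_of_antisymm_snd, det_single_eq_sum_leviCivita]
  · simp only [mul_left_comm (ξ _), ← mul_sum, hH.sum_mul_contractFirst_snd]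
  · intro r s t u
    rw [hH.contractFirst_swap, mul_neg]
  · intro s t u
    simp only [← mul_assoc, ← sum_mul, hH.sum_mul_characteristicMatrix_right, zero_mul]
  · intro r t u
    rw [sum_mul_mul_mul, hH.sum_mul_characteristicMatrix_right, mul_zero, zero_mul]

theorem mul_leviCivitaContraction_leviCivitaContraction (i : Fin 4) :
    ξ i * leviCivitaContraction R (fun m n p q => leviCivitaContraction R fun r s t u =>
      contractLast H ξ m n r * characteristicMatrix H ξ p s * contractFirst H ξ q t u) =
      -2 * ∑ n, ∑ p, ∑ q, leviCivita R ![i, n, p, q] *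
        leviCivitaContraction R fun r s t u =>
          characteristicMatrix H ξ n r * characteristicMatrix H ξ p s *
            contractFirst H ξ q t u := by
  rw [mul_leviCivitaContraction_of_antisymm_fst]
  · have hneg (F : Fin 4 → Fin 4 → Fin 4 → Fin 4 → R) :
        leviCivitaContraction R (fun r s t u => -F r s t u) = -leviCivitaContraction R F :=
      map_neg (leviCivitaContraction R) F
    simp only [sum_mul_leviCivitaContraction, ← mul_assoc, ← sum_mul, hH.sum_mul_contractLast,
      neg_mul, hneg, mul_neg, sum_neg_distrib]
  · intro m n p q
    rw [← map_neg]
    congr! 1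
    ext r s t u
    simp only [hH.contractLast_swap ξ m, neg_mul, Pi.neg_apply]
  · intro m n q
    simp only [sum_mul_leviCivitaContraction, sum_mul_mul_mul,
      hH.sum_mul_characteristicMatrix_left, mul_zero, zero_mul]
    exact map_zero (leviCivitaContraction R)
  · intro m n p
    simp only [sum_mul_leviCivitaContraction, mul_left_comm (ξ _), ← mul_sum,
      hH.sum_mul_contractFirst_fst, mul_zero]
    exact map_zero (leviCivitaContraction R)

theorem mul_fresnelQuartic_eq_adjugate (i j : Fin 4) :
    ξ i * ξ j * fresnelQuartic H ξ = 24 * (characteristicMatrix H ξ).adjugate j i := by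
  set M := characteristicMatrix H ξ with hM
  calc ξ i * ξ j * fresnelQuartic H ξ
    _ = 2 * ∑ n, ∑ p, ∑ q, leviCivita R ![i, n, p, q] *
          (ξ j * leviCivitaContraction R fun r s t u =>
            M n r * M p s * contractFirst H ξ q t u) := by
      rw [hH.fresnelQuartic_eq, mul_comm (ξ i), mul_assoc, mul_neg,
        hH.mul_leviCivitaContraction_leviCivitaContraction]
      simp only [mul_left_comm _ (ξ j), ← mul_sum]
      ring
    _ = 4 * ∑ n, ∑ p, ∑ q,
          leviCivita R ![i, n, p, q] * det (of ![Pi.single j 1, M n, M p, M q]) := by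
      simp only [hM, hH.mul_leviCivitaContraction_eq_det, mul_left_comm _ (2 : R), ← mul_sum]
      ring
    _ = 24 * M.adjugate j i := by
      rw [sum_leviCivita_mul_det]
      ring

end Fresnel

end IsDoubleBivector

end DoubleBivector

theorem low_rank_implies_null_general {K : Type*} [Field K]
    {H : Fin 4 → Fin 4 → Fin 4 → Fin 4 → K} (hH : IsDoubleBivector H) (ξ : Fin 4 → K)
    (hrank : (characteristicMatrix H ξ).rank < 3) : fresnelQuartic H ξ = 0 := by
  by_cases hξ : ξ = 0
  · simp [fresnelQuartic, hξ]
  obtain ⟨i, hi⟩ := Function.ne_iff.1 hξ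
  have h := hH.mul_fresnelQuartic_eq_adjugate ξ i i
  rw [adjugate_eq_zero_of_rank_lt hrank] at h
  simpa [show ξ i ≠ 0 from hi] using h

theorem isDoubleBivector_fromPetrov (P : Matrix (Fin 6) (Fin 6) ℝ) :
    IsDoubleBivector (fromPetrov P) := by
  have hself (a : Fin 4) : bSgn a a = 0 := by fin_cases a <;> rfl
  have hswap (a b : Fin 4) : bSgn a b = -bSgn b a := by
    fin_cases a <;> fin_cases b <;> simp [bSgn]
  have hidx : ∀ a b : Fin 4, bIdx a b = bIdx b a := by decide
  refine ⟨fun a c d => ?_, fun a b c d => ?_, fun a b c => ?_, fun a b c d => ?_⟩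
  · simp [fromPetrov, hself]
  · simp only [fromPetrov, hswap a b, hidx a b, neg_mul]
  · simp [fromPetrov, hself]
  · simp only [fromPetrov, hswap c d, hidx c d, mul_neg, neg_mul]

theorem isDoubleBivector_ginv (G : Fin 4 → Fin 4 → Fin 4 → Fin 4 → ℝ) :
    IsDoubleBivector (ginv G) :=
  isDoubleBivector_fromPetrov _

theorem fresnelPoly_eq_mul_fresnelQuartic (G : Fin 4 → Fin 4 → Fin 4 → Fin 4 → ℝ)
    (ξ : Fin 4 → ℝ) :
    fresnelPoly G ξ =
      -(1 / 24) * (|(petrov G).det| ^ ((1 : ℝ) / 6)) ^ 2 * fresnelQuartic (ginv G) ξ := by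
  have heps (a b c d : Fin 4) : eps a b c d = leviCivita ℝ ![a, b, c, d] := rfl
  have hvol (m n p q r s t u : Fin 4) (A B C x y z w : ℝ) :
      vol G m n p q * vol G r s t u * A * B * C * x * y * z * w =
        (|(petrov G).det| ^ ((1 : ℝ) / 6)) ^ 2 *
          (leviCivita ℝ ![m, n, p, q] * leviCivita ℝ ![r, s, t, u] *
            A * B * C * x * y * z * w) := by
    simp only [vol, heps]
    ring
  rw [fresnelPoly, fresnelQuartic, mul_assoc]
  congr 1
  iterate 12
    rw [mul_sum]
    refine sum_congr rfl fun _ _ => ?_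
  exact hvol ..

end

/-- Let `G` be an area metric on `ℝ⁴` and `ξ` a covector.  If the `4 × 4`
matrix `M^{ab} = (G⁻¹)^{acbd} ξ_c ξ_d` has rank `< 3`, then `𝒢(ξ,ξ,ξ,ξ) = 0`. -/
theorem low_rank_implies_null
    (G : Fin 4 → Fin 4 → Fin 4 → Fin 4 → ℝ)
    (hsym : ∀ a b c d, G a b c d = G c d a b)
    (hasym : ∀ a b c d, G a b c d = - G b a c d)
    (hinv : IsUnit (petrov G).det)
    (ξ : Fin 4 → ℝ)
    (hrank : (Matrix.of fun a b : Fin 4 =>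
        ∑ c : Fin 4, ∑ d : Fin 4, ginv G a c b d * ξ c * ξ d).rank < 3) :
    fresnelPoly G ξ = 0 := by
  rw [fresnelPoly_eq_mul_fresnelQuartic,
    low_rank_implies_null_general (isDoubleBivector_ginv G) ξ hrank, mul_zero]

end
end

section
/- (Theorem 3.1.) Let G and H be area metrics on ℝ⁴ and suppose there exists an invertible linear map T : Λ²ℝ⁴ → Λ²ℝ⁴ such that Ĝ(x)(y) = Ĥ(Tx)(Ty) and ω̂_G(x)(y) = ω̂_H(Tx)(Ty) for all x, y ∈ Λ²ℝ⁴. Then there exists t ∈ GL(4,ℝ) such that either G_{abcd} = t^m_a t^n_b t^p_c t^q_d H_{mnpq} for all indices, or G_{abcd} = t^m_a t^n_b t^p_c t^q_d H̃_{mnpq} for all indices, where H̃_{mnpq} = (1/4) ε_{mnij} ε_{pqkl} H_{ijkl} (sum over all i,j,k,l, with ε totally antisymmetric and ε_{0123} = 1). -/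
noncomputable section

/-!
`T` preserves the wedge pairing on `Λ²ℝ⁴` up to a nonzero factor, and such a `T` is either a
multiple of some `Λ²t` or a multiple of some `Λ²t` followed by duality. Indeed, `T` sends each
`e_a ∧ e_b` to a null bivector, which by Plücker's relation is decomposable. The images of
`e₀ ∧ e₁` and `e₂ ∧ e₃` span complementary planes, so up to a factor `Λ²s` the map `T` fixes both
bivectors and hence acts on the orthogonal complement `⟨e₀, e₁⟩ ⊗ ⟨e₂, e₃⟩`, the space of `2 × 2`
matrices with the determinant as quadratic form. After normalizing the rank-one images of
`e₀ ∧ e₂` and `e₃ ∧ e₁` as well, `T` is diagonal up to exchanging `e₀ ∧ e₃` with `e₁ ∧ e₂`. A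
diagonal similitude is a multiple of `Λ²t` with `t` diagonal, and the exchange is a `Λ²t` followed
by duality. Finally, `Ĝ` is quadratic in `T`, so the sign of a factor `c` is immaterial and `c` is
absorbed into `t` as `√|c|`.
-/

open scoped Matrix

section WedgeProduct

variable {R : Type*} [CommRing R]

/-- The wedge product of two vectors of `R⁴`, in Petrov coordinates on `Λ²R⁴`. -/
def wedge (v w : Fin 4 → R) : Fin 6 → R :=
  fun A => v (pFst A) * w (pSnd A) - v (pSnd A) * w (pFst A)

variable (R) in
/-- The Gram matrix of the wedge pairing `Λ²R⁴ × Λ²R⁴ → Λ⁴R⁴ = R` in Petrov coordinates. The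
Petrov ordering is chosen so that complementary index pairs `A`, `B` are those with `B = A.rev`,
all with sign `+1`. -/
def wedgeGram : Matrix (Fin 6) (Fin 6) R :=
  Fin.revPerm.permMatrix R

/-- The second compound matrix of `t`, i.e. the matrix of `Λ²t` in Petrov coordinates. -/
def secondCompound (t : Matrix (Fin 4) (Fin 4) R) : Matrix (Fin 6) (Fin 6) R :=
  Matrix.of fun A B => wedge (t.col (pFst B)) (t.col (pSnd B)) A

/-- The Plücker quadratic form on `Λ²R⁴`, i.e. the Pfaffian of `skewMatrix p`; over a field it
vanishes exactly on the decomposable bivectors. -/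
def pluckerForm (p : Fin 6 → R) : R :=
  p 0 * p 5 + p 1 * p 4 + p 2 * p 3

/-- The skew-symmetric `4 × 4` matrix with Petrov coordinates `p`. -/
def skewMatrix (p : Fin 6 → R) : Matrix (Fin 4) (Fin 4) R :=
  !![0, p 0, p 1, p 2; -p 0, 0, p 3, -p 4; -p 1, -p 3, 0, p 5; -p 2, p 4, -p 5, 0]

lemma wedge_swap (v w : Fin 4 → R) : wedge w v = -wedge v w := by
  ext A
  simp only [wedge, Pi.neg_apply]
  ring

lemma smul_wedge (r : R) (v w : Fin 4 → R) : wedge (r • v) w = r • wedge v w := by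
  ext A
  simp only [wedge, Pi.smul_apply, smul_eq_mul]
  ring

lemma wedge_single (A : Fin 6) :
    wedge (Pi.single (pFst A) (1 : R)) (Pi.single (pSnd A) 1) = Pi.single A 1 := by
  ext B
  fin_cases A <;> fin_cases B <;> simp [wedge, pFst, pSnd]

lemma dotProduct_wedgeGram_mulVec (p q : Fin 6 → R) :
    p ⬝ᵥ wedgeGram R *ᵥ q = ∑ A, p A * q A.rev := by
  simp [wedgeGram, Matrix.permMatrix_mulVec, dotProduct]

lemma wedgeGram_apply (A B : Fin 6) : wedgeGram R A B = if A.rev = B then 1 else 0 := by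
  simp [wedgeGram, Equiv.toPEquiv_apply, PEquiv.toMatrix_apply]

lemma wedgeGram_transpose : (wedgeGram R)ᵀ = wedgeGram R := by
  rw [wedgeGram, Matrix.transpose_permMatrix]
  rfl

lemma wedge_dotProduct_wedge (v w x y : Fin 4 → R) :
    wedge v w ⬝ᵥ wedgeGram R *ᵥ wedge x y = (Matrix.of ![v, w, x, y]).det := by
  rw [dotProduct_wedgeGram_mulVec]
  simp [Matrix.det_succ_row_zero, Fin.sum_univ_succ, Fin.succAbove, wedge, pFst, pSnd]
  ring

lemma wedge_fst_fst (a b c d : R) :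
    wedge ![a, b, 0, 0] ![c, d, 0, 0] = (a * d - b * c) • Pi.single 0 1 := by
  ext A
  fin_cases A <;> simp [wedge, pFst, pSnd]

lemma wedge_snd_snd (a b c d : R) :
    wedge ![0, 0, a, b] ![0, 0, c, d] = (a * d - b * c) • Pi.single 5 1 := by
  ext A
  fin_cases A <;> simp [wedge, pFst, pSnd]

lemma wedge_fst_snd_dotProduct_wedge (a₀ a₁ b₀ b₁ c₀ c₁ d₀ d₁ : R) :
    wedge ![a₀, a₁, 0, 0] ![0, 0, b₀, b₁] ⬝ᵥ
        wedgeGram R *ᵥ wedge ![c₀, c₁, 0, 0] ![0, 0, d₀, d₁] =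
      -((a₀ * c₁ - a₁ * c₀) * (b₀ * d₁ - b₁ * d₀)) := by
  simp only [dotProduct_wedgeGram_mulVec, Fin.sum_univ_six, wedge, pFst, pSnd, Fin.reduceRev,
    Matrix.cons_val]
  ring

lemma wedge_fst_fst_dotProduct_wedge (a₀ a₁ b₀ b₁ c₀ c₁ d₀ d₁ : R) :
    wedge ![a₀, a₁, 0, 0] ![c₀, c₁, 0, 0] ⬝ᵥ
        wedgeGram R *ᵥ wedge ![0, 0, b₀, b₁] ![0, 0, d₀, d₁] =
      (a₀ * c₁ - a₁ * c₀) * (b₀ * d₁ - b₁ * d₀) := by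
  simp [wedge_fst_fst, wedge_snd_snd, wedgeGram_apply, Matrix.mulVec_smul, mul_comm]

lemma dotProduct_wedgeGram_mulVec_self (p : Fin 6 → R) :
    p ⬝ᵥ wedgeGram R *ᵥ p = 2 * pluckerForm p := by
  simp only [dotProduct_wedgeGram_mulVec, pluckerForm, Fin.sum_univ_six, Fin.reduceRev]
  ring

lemma secondCompound_mulVec_wedge (t : Matrix (Fin 4) (Fin 4) R) (v w : Fin 4 → R) :
    secondCompound t *ᵥ wedge v w = wedge (t *ᵥ v) (t *ᵥ w) := by
  ext A
  simp only [Matrix.mulVec, dotProduct, Fin.sum_univ_four, Fin.sum_univ_six, secondCompound, wedge,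
    Matrix.of_apply, Matrix.col_apply, pFst, pSnd, Matrix.cons_val]
  ring

lemma secondCompound_col (t : Matrix (Fin 4) (Fin 4) R) (B : Fin 6) :
    (secondCompound t).col B = wedge (t.col (pFst B)) (t.col (pSnd B)) :=
  rfl

lemma secondCompound_one : secondCompound (1 : Matrix (Fin 4) (Fin 4) R) = 1 := by
  ext A B
  have h (a : Fin 4) : (1 : Matrix (Fin 4) (Fin 4) R).col a = Pi.single a 1 := by
    rw [← Matrix.mulVec_single_one, Matrix.one_mulVec]
  simp only [secondCompound, Matrix.of_apply, h, wedge_single]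
  simp [Matrix.one_apply, Pi.single_apply]

lemma secondCompound_mul (s t : Matrix (Fin 4) (Fin 4) R) :
    secondCompound (s * t) = secondCompound s * secondCompound t := by
  ext A B
  exact (congrFun (secondCompound_mulVec_wedge s (t.col (pFst B)) (t.col (pSnd B))) A).symm

lemma secondCompound_smul (r : R) (t : Matrix (Fin 4) (Fin 4) R) :
    secondCompound (r • t) = r ^ 2 • secondCompound t := by
  ext A B
  simp only [secondCompound, wedge, Matrix.of_apply, Matrix.col_apply, Matrix.smul_apply,
    smul_eq_mul]
  ring

lemma secondCompound_transpose (t : Matrix (Fin 4) (Fin 4) R) :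
    (secondCompound t)ᵀ = secondCompound tᵀ := by
  ext A B
  simp only [secondCompound, wedge, Matrix.of_apply, Matrix.col_apply, Matrix.transpose_apply]
  ring

lemma secondCompound_transpose_mul_wedgeGram_mul (t : Matrix (Fin 4) (Fin 4) R) :
    (secondCompound t)ᵀ * wedgeGram R * secondCompound t = t.det • wedgeGram R := by
  ext A B
  let e (a : Fin 4) : Fin 4 → R := Pi.single a 1
  let E : Matrix (Fin 4) (Fin 4) R :=
    Matrix.of ![e (pFst A), e (pSnd A), e (pFst B), e (pSnd B)]
  calc ((secondCompound t)ᵀ * wedgeGram R * secondCompound t) A B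
      = (secondCompound t).col A ⬝ᵥ wedgeGram R *ᵥ (secondCompound t).col B := by
        rw [Matrix.mul_assoc]; rfl
    _ = (E * tᵀ).det := by
        rw [secondCompound_col, secondCompound_col, wedge_dotProduct_wedge]
        congr 1
        ext i j
        fin_cases i <;> simp [E, e, Matrix.mul_apply, Pi.single_apply]
    _ = t.det * (Pi.single A 1 ⬝ᵥ wedgeGram R *ᵥ Pi.single B 1) := by
        rw [Matrix.det_mul, Matrix.det_transpose, mul_comm, ← wedge_single A, ← wedge_single B,
          wedge_dotProduct_wedge]
    _ = (t.det • wedgeGram R) A B := by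
        simp

lemma secondCompound_mul_secondCompound_inv {s : Matrix (Fin 4) (Fin 4) R} (hs : IsUnit s.det) :
    secondCompound s * secondCompound s⁻¹ = 1 := by
  rw [← secondCompound_mul, Matrix.mul_nonsing_inv _ hs, secondCompound_one]

lemma secondCompound_mul_wedgeGram {s : Matrix (Fin 4) (Fin 4) R} (hs : IsUnit s.det) :
    secondCompound s * wedgeGram R = s.det • (wedgeGram R * secondCompound sᵀ⁻¹) := by
  have hst : IsUnit sᵀ.det := by rwa [Matrix.det_transpose]
  have h := secondCompound_transpose_mul_wedgeGram_mul sᵀ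
  rw [secondCompound_transpose, Matrix.transpose_transpose, Matrix.det_transpose] at h
  rw [← Matrix.smul_mul, ← h, Matrix.mul_assoc, secondCompound_mul_secondCompound_inv hst,
    Matrix.mul_one]

lemma wedge_skewMatrix_row (p : Fin 6 → R) (A : Fin 6) :
    wedge ((skewMatrix p).row (pFst A)) ((skewMatrix p).row (pSnd A)) =
      p A • p - pluckerForm p • Pi.single A.rev 1 := by
  ext B
  fin_cases A <;> fin_cases B <;>
    simp [wedge, pluckerForm, skewMatrix, pFst, pSnd, Fin.rev] <;> ring

variable (R) in
/-- The permutation matrix exchanging the complementary index pairs `[03]` and `[12]`. -/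
def middleSwap : Matrix (Fin 6) (Fin 6) R :=
  (Equiv.swap 2 3).permMatrix R

lemma middleSwap_mul_self : middleSwap R * middleSwap R = 1 := by
  rw [middleSwap, ← Matrix.permMatrix_mul, Equiv.swap_mul_self, Matrix.permMatrix_one]

lemma mul_middleSwap_apply (M : Matrix (Fin 6) (Fin 6) R) (A B : Fin 6) :
    (M * middleSwap R) A B = M A (Equiv.swap 2 3 B) := by
  simp [middleSwap, PEquiv.mul_toMatrix_toPEquiv]

lemma middleSwap_eq_wedgeGram_mul :
    middleSwap R =
      wedgeGram R * secondCompound !![0, 0, 0, -1; 0, 0, 1, 0; 0, -1, 0, 0; 1, 0, 0, 0] := by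
  ext A B
  rw [wedgeGram, middleSwap]
  fin_cases A <;> fin_cases B <;>
    simp [PEquiv.toMatrix_toPEquiv_mul, PEquiv.toMatrix_apply, Equiv.swap_apply_def, Fin.rev,
      secondCompound, wedge, pFst, pSnd]

end WedgeProduct

section WedgeSimilitude

variable {K : Type*} [Field K] {T : Matrix (Fin 6) (Fin 6) K}

lemma exists_eq_wedge_of_pluckerForm_eq_zero {p : Fin 6 → K} (hp : pluckerForm p = 0) :
    ∃ v w, p = wedge v w := by
  by_cases h : p = 0
  · exact ⟨0, 0, by simp [h, funext_iff, wedge]⟩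
  · obtain ⟨A, hA⟩ := Function.ne_iff.mp h
    refine ⟨(p A)⁻¹ • (skewMatrix p).row (pFst A), (skewMatrix p).row (pSnd A), ?_⟩
    rw [smul_wedge, wedge_skewMatrix_row, hp, zero_smul, sub_zero, inv_smul_smul₀ hA]

lemma exists_mul_eq_of_mul_eq_mul {p q r s : K} (h : p * s = q * r) :
    ∃ a b c d, p = a * c ∧ q = a * d ∧ r = b * c ∧ s = b * d := by
  by_cases hp : p = 0
  · obtain hq | hr : q = 0 ∨ r = 0 := by simpa [hp] using h.symm
    · exact ⟨0, 1, r, s, by simp [hp, hq]⟩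
    · exact ⟨q, s, 0, 1, by simp [hp, hr]⟩
  · refine ⟨1, r / p, p, q, by simp, by simp, by field_simp, by field_simp; linear_combination h⟩

/-- `T` preserves the wedge pairing of bivectors up to a nonzero factor. -/
def IsWedgeSimilitude (T : Matrix (Fin 6) (Fin 6) K) : Prop :=
  ∃ l : K, l ≠ 0 ∧ Tᵀ * wedgeGram K * T = l • wedgeGram K

/-- `T` is, up to a nonzero factor, induced by an invertible linear map of `K⁴`, or such an induced
map followed by the duality `wedgeGram K`. -/
def IsCompoundUpToDual (T : Matrix (Fin 6) (Fin 6) K) : Prop :=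
  ∃ c : K, c ≠ 0 ∧ ∃ t : Matrix (Fin 4) (Fin 4) K, IsUnit t.det ∧
    (T = c • secondCompound t ∨ T = c • (wedgeGram K * secondCompound t))

lemma IsCompoundUpToDual.secondCompound_mul_left (hT : IsCompoundUpToDual T)
    {s : Matrix (Fin 4) (Fin 4) K} (hs : IsUnit s.det) :
    IsCompoundUpToDual (secondCompound s * T) := by
  obtain ⟨c, hc, t, ht, rfl | rfl⟩ := hT
  · refine ⟨c, hc, s * t, ?_, .inl ?_⟩
    · rw [Matrix.det_mul]
      exact hs.mul ht
    · rw [secondCompound_mul, Matrix.mul_smul]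
  · refine ⟨c * s.det, mul_ne_zero hc hs.ne_zero, sᵀ⁻¹ * t, ?_, .inr ?_⟩
    · rw [Matrix.det_mul, Matrix.det_nonsing_inv, Matrix.det_transpose]
      exact hs.ringInverse.mul ht
    · rw [secondCompound_mul, Matrix.mul_smul, ← Matrix.mul_assoc,
        secondCompound_mul_wedgeGram hs, Matrix.smul_mul, Matrix.mul_assoc, smul_smul]

lemma IsCompoundUpToDual.of_inv_mul {s : Matrix (Fin 4) (Fin 4) K} (hs : IsUnit s.det)
    (h : IsCompoundUpToDual (secondCompound s⁻¹ * T)) : IsCompoundUpToDual T := by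
  simpa [← Matrix.mul_assoc, secondCompound_mul_secondCompound_inv hs] using
    h.secondCompound_mul_left hs

lemma IsCompoundUpToDual.smul (hT : IsCompoundUpToDual T) {r : K} (hr : r ≠ 0) :
    IsCompoundUpToDual (r • T) := by
  obtain ⟨c, hc, t, ht, h⟩ := hT
  refine ⟨r * c, mul_ne_zero hr hc, t, ht, h.imp ?_ ?_⟩ <;>
  · rintro rfl
    rw [smul_smul]

lemma IsWedgeSimilitude.mul {S T : Matrix (Fin 6) (Fin 6) K} (hS : IsWedgeSimilitude S)
    (hT : IsWedgeSimilitude T) : IsWedgeSimilitude (S * T) := by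
  obtain ⟨k, hk, hS⟩ := hS
  obtain ⟨l, hl, hT⟩ := hT
  refine ⟨k * l, mul_ne_zero hk hl, ?_⟩
  calc (S * T)ᵀ * wedgeGram K * (S * T)
      = Tᵀ * (Sᵀ * wedgeGram K * S) * T := by
        rw [Matrix.transpose_mul]
        simp only [Matrix.mul_assoc]
    _ = (k * l) • wedgeGram K := by
        rw [hS, Matrix.mul_smul, Matrix.smul_mul, hT, smul_smul]

lemma isWedgeSimilitude_secondCompound {s : Matrix (Fin 4) (Fin 4) K} (hs : IsUnit s.det) :
    IsWedgeSimilitude (secondCompound s) :=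
  ⟨s.det, hs.ne_zero, secondCompound_transpose_mul_wedgeGram_mul s⟩

lemma IsWedgeSimilitude.secondCompound_inv_mul (hT : IsWedgeSimilitude T)
    {s : Matrix (Fin 4) (Fin 4) K} (hs : IsUnit s.det) :
    IsWedgeSimilitude (secondCompound s⁻¹ * T) :=
  (isWedgeSimilitude_secondCompound (s.isUnit_nonsing_inv_det hs)).mul hT

lemma IsWedgeSimilitude.exists_sum_mul_rev (hT : IsWedgeSimilitude T) :
    ∃ l : K, l ≠ 0 ∧ ∀ A B, ∑ C, T C A * T C.rev B = if A.rev = B then l else 0 := by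
  obtain ⟨l, hl, hT⟩ := hT
  refine ⟨l, hl, fun A B => ?_⟩
  calc ∑ C, T C A * T C.rev B = T.col A ⬝ᵥ wedgeGram K *ᵥ T.col B :=
        (dotProduct_wedgeGram_mulVec (T.col A) (T.col B)).symm
    _ = (Tᵀ * wedgeGram K * T) A B := by
        rw [Matrix.mul_assoc]
        rfl
    _ = if A.rev = B then l else 0 := by
        simp [hT, wedgeGram_apply]

lemma IsWedgeSimilitude.pluckerForm_col [NeZero (2 : K)] (hT : IsWedgeSimilitude T) (A : Fin 6) :
    pluckerForm (T.col A) = 0 := by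
  obtain ⟨l, -, h⟩ := hT.exists_sum_mul_rev
  have hA : A.rev ≠ A := by decide +revert
  have h2 : 2 * pluckerForm (T.col A) = 0 := by
    rw [← dotProduct_wedgeGram_mulVec_self, dotProduct_wedgeGram_mulVec]
    exact (h A A).trans (if_neg hA)
  exact (mul_eq_zero.mp h2).resolve_left two_ne_zero

lemma col_secondCompound_inv_mul {s : Matrix (Fin 4) (Fin 4) K} (hs : IsUnit s.det) {A : Fin 6}
    {r : K} (h : T.col A = r • (secondCompound s).col A) :
    (secondCompound s⁻¹ * T).col A = r • Pi.single A 1 := by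
  have hinv : secondCompound s⁻¹ * secondCompound s = 1 := by
    rw [← secondCompound_mul, Matrix.nonsing_inv_mul _ hs, secondCompound_one]
  rw [← Matrix.mulVec_single_one, ← Matrix.mulVec_mulVec, Matrix.mulVec_single_one, h,
    Matrix.mulVec_smul, ← Matrix.mulVec_single_one (secondCompound s), Matrix.mulVec_mulVec, hinv,
    Matrix.one_mulVec]

lemma diagonal_eq_smul_secondCompound {x : Fin 6 → K} (h0 : x 0 ≠ 0) (h1 : x 1 ≠ 0)
    (h3 : x 3 ≠ 0) (h14 : x 1 * x 4 = x 0 * x 5) (h23 : x 2 * x 3 = x 0 * x 5) :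
    Matrix.diagonal x = (x 3 / (x 0 * x 1)) •
      secondCompound (Matrix.diagonal ![x 0 * x 1 / x 3, x 0, x 1, x 2]) := by
  ext A B
  fin_cases A <;> fin_cases B <;>
    simp [secondCompound, wedge, pFst, pSnd] <;> field_simp <;> grind

lemma IsWedgeSimilitude.exists_eq_smul_secondCompound_of_isDiag (hT : IsWedgeSimilitude T)
    (hd : T.IsDiag) : ∃ c : K, c ≠ 0 ∧ ∃ t : Matrix (Fin 4) (Fin 4) K, IsUnit t.det ∧
      T = c • secondCompound t := by
  obtain ⟨x, rfl⟩ : ∃ x, T = Matrix.diagonal x := ⟨T.diag, hd.diagonal_diag.symm⟩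
  obtain ⟨l, hl, h⟩ := hT.exists_sum_mul_rev
  have hmul (A : Fin 6) : x A * x A.rev = l := by
    simpa [Matrix.diagonal_apply] using h A A.rev
  have hx (A : Fin 6) : x A ≠ 0 := left_ne_zero_of_mul (hmul A ▸ hl)
  refine ⟨_, ?_, _, ?_, diagonal_eq_smul_secondCompound (hx 0) (hx 1) (hx 3)
    ((hmul 1).trans (hmul 0).symm) ((hmul 2).trans (hmul 0).symm)⟩
  · simp [hx]
  · simp [Fin.prod_univ_four, hx]

lemma IsWedgeSimilitude.apply_rev_eq_zero (hT : IsWedgeSimilitude T) {A B : Fin 6} {r : K}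
    (hA : T.col A = r • Pi.single A 1) (hB : A.rev ≠ B) : T A.rev B = 0 := by
  obtain ⟨l, hl, h⟩ := hT.exists_sum_mul_rev
  have hmul (C : Fin 6) : r * T A.rev C = if A.rev = C then l else 0 := by
    have hTA (D : Fin 6) : T D A = r * (Pi.single A 1 : Fin 6 → K) D := congrFun hA D
    rw [← h]
    simp [hTA, Pi.single_apply]
  have hr : r ≠ 0 := left_ne_zero_of_mul (b := T A.rev A.rev) (by simpa [hmul] using hl)
  simpa [hB, hr] using hmul B

lemma IsWedgeSimilitude.apply_eq_zero (hT : IsWedgeSimilitude T)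
    (h : ∀ A, A ≠ 2 → A ≠ 3 → ∃ r : K, T.col A = r • Pi.single A 1) {A B : Fin 6} (h2 : A ≠ 2)
    (h3 : A ≠ 3) (hAB : A ≠ B) : T A B = 0 := by
  obtain ⟨r, hr⟩ := h A.rev (by grind) (by grind)
  simpa using hT.apply_rev_eq_zero hr (by simpa using hAB)

lemma IsWedgeSimilitude.isDiag [NeZero (2 : K)] (hT : IsWedgeSimilitude T)
    (h : ∀ A, A ≠ 2 → A ≠ 3 → ∃ r : K, T.col A = r • Pi.single A 1) (h22 : T 2 2 ≠ 0) :
    T.IsDiag := by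
  have hzero {A B : Fin 6} : A ≠ 2 → A ≠ 3 → A ≠ B → T A B = 0 := hT.apply_eq_zero h
  obtain ⟨l, hl, hpair⟩ := hT.exists_sum_mul_rev
  have h32 : T 3 2 = 0 := by
    simpa [pluckerForm, hzero, h22] using hT.pluckerForm_col 2
  have h33 : T 2 2 * T 3 3 = l := by
    simpa [Fin.sum_univ_six, hzero, h32, Fin.rev] using hpair 2 3
  have h23 : T 2 3 = 0 := by
    simpa [pluckerForm, hzero, right_ne_zero_of_mul (h33 ▸ hl)] using hT.pluckerForm_col 3
  intro A B hAB
  by_cases hB : B ≠ 2 ∧ B ≠ 3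
  · obtain ⟨r, hr⟩ := h B hB.1 hB.2
    simpa [hAB] using congrFun hr A
  · grind

lemma isWedgeSimilitude_middleSwap : IsWedgeSimilitude (middleSwap K) := by
  refine ⟨1, one_ne_zero, ?_⟩
  have h : Equiv.swap 2 3 * Fin.revPerm * Equiv.swap 2 3 = (Fin.revPerm : Equiv.Perm (Fin 6)) := by
    decide
  rw [one_smul, middleSwap, wedgeGram, Matrix.transpose_permMatrix, Equiv.swap_inv,
    ← Matrix.permMatrix_mul, ← Matrix.permMatrix_mul, ← mul_assoc, h]

lemma isCompoundUpToDual_middleSwap : IsCompoundUpToDual (middleSwap K) := by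
  refine ⟨1, one_ne_zero, _, ?_, .inr (middleSwap_eq_wedgeGram_mul.trans (one_smul K _).symm)⟩
  simp [Matrix.det_succ_row_zero, Fin.sum_univ_succ, Fin.succAbove]

lemma IsWedgeSimilitude.isCompoundUpToDual_of_col_eq_smul_single [NeZero (2 : K)]
    (hT : IsWedgeSimilitude T)
    (h : ∀ A, A ≠ 2 → A ≠ 3 → ∃ r : K, T.col A = r • Pi.single A 1) :
    IsCompoundUpToDual T := by
  by_cases h22 : T 2 2 = 0
  · have hTS := hT.mul isWedgeSimilitude_middleSwap
    have hcol (A : Fin 6) (h2 : A ≠ 2) (h3 : A ≠ 3) :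
        ∃ r : K, (T * middleSwap K).col A = r • Pi.single A 1 := by
      obtain ⟨r, hr⟩ := h A h2 h3
      refine ⟨r, hr ▸ funext fun B => ?_⟩
      rw [Matrix.col_apply, mul_middleSwap_apply, Equiv.swap_apply_of_ne_of_ne h2 h3,
        Matrix.col_apply]
    have hTS22 : (T * middleSwap K) 2 2 ≠ 0 := by
      obtain ⟨l, hl, hpair⟩ := hT.exists_sum_mul_rev
      have h23 : T 3 2 * T 2 3 = l := by
        simpa [Fin.sum_univ_six, hT.apply_eq_zero h, h22, Fin.rev] using hpair 2 3
      rw [mul_middleSwap_apply, Equiv.swap_apply_left]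
      exact right_ne_zero_of_mul (h23 ▸ hl)
    obtain ⟨c, hc, t, ht, hct⟩ :=
      hTS.exists_eq_smul_secondCompound_of_isDiag (hTS.isDiag hcol hTS22)
    have hTct : T = c • (secondCompound t * middleSwap K) := by
      rw [← Matrix.smul_mul, ← hct, Matrix.mul_assoc, middleSwap_mul_self, Matrix.mul_one]
    exact hTct ▸ (isCompoundUpToDual_middleSwap.secondCompound_mul_left ht).smul hc
  · obtain ⟨c, hc, t, ht, hct⟩ := hT.exists_eq_smul_secondCompound_of_isDiag (hT.isDiag h h22)
    exact ⟨c, hc, t, ht, .inl hct⟩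

lemma exists_eq_wedge_of_apply_zero_five {p : Fin 6 → K} (h0 : p 0 = 0) (h5 : p 5 = 0)
    (hp : pluckerForm p = 0) :
    ∃ a b c d, p = wedge ![a, b, 0, 0] ![0, 0, c, d] := by
  obtain ⟨a, b, c, d, h1, h2, h3, h4⟩ : ∃ a b c d,
      p 1 = a * c ∧ p 2 = a * d ∧ p 3 = b * c ∧ -p 4 = b * d := by
    refine exists_mul_eq_of_mul_eq_mul ?_
    rw [pluckerForm, h0] at hp
    linear_combination -hp
  refine ⟨a, b, c, d, funext fun A => ?_⟩
  fin_cases A <;> simp [wedge, pFst, pSnd, h0, h1, h2, h3, ← h4, h5]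

lemma IsWedgeSimilitude.exists_col_eq_smul_secondCompound_col [NeZero (2 : K)]
    (hT : IsWedgeSimilitude T) (h0 : T.col 0 = Pi.single 0 1) (h5 : T.col 5 = Pi.single 5 1) :
    ∃ s : Matrix (Fin 4) (Fin 4) K, IsUnit s.det ∧
      ∀ A, A ≠ 2 → A ≠ 3 → ∃ r : K, T.col A = r • (secondCompound s).col A := by
  have hwedge (B : Fin 6) (hB0 : B ≠ 0) (hB5 : B ≠ 5) :
      ∃ a b c d, T.col B = wedge ![a, b, 0, 0] ![0, 0, c, d] :=
    exists_eq_wedge_of_apply_zero_five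
      (hT.apply_rev_eq_zero (h5.trans (one_smul K _).symm) hB0.symm)
      (hT.apply_rev_eq_zero (h0.trans (one_smul K _).symm) hB5.symm) (hT.pluckerForm_col B)
  obtain ⟨a₀, a₁, b₀, b₁, h1⟩ := hwedge 1 (by decide) (by decide)
  obtain ⟨c₀, c₁, d₀, d₁, h4⟩ := hwedge 4 (by decide) (by decide)
  have hne : (a₀ * c₁ - a₁ * c₀) * (b₀ * d₁ - b₁ * d₀) ≠ 0 := by
    obtain ⟨l, hl, h⟩ := hT.exists_sum_mul_rev
    have hpair := (dotProduct_wedgeGram_mulVec (T.col 1) (T.col 4)).trans (h 1 4)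
    rw [h1, h4, wedge_fst_snd_dotProduct_wedge] at hpair
    exact neg_ne_zero.mp (hpair.trans_ne hl)
  let s : Matrix (Fin 4) (Fin 4) K :=
    (Matrix.of ![![a₀, a₁, 0, 0], ![c₀, c₁, 0, 0], ![0, 0, b₀, b₁], ![0, 0, d₀, d₁]])ᵀ
  have hs : s.det = (a₀ * c₁ - a₁ * c₀) * (b₀ * d₁ - b₁ * d₀) := by
    rw [Matrix.det_transpose, ← wedge_dotProduct_wedge, wedge_fst_fst_dotProduct_wedge]
  have hs0 : (secondCompound s).col 0 = (a₀ * c₁ - a₁ * c₀) • Pi.single 0 1 :=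
    wedge_fst_fst a₀ a₁ c₀ c₁
  have hs5 : (secondCompound s).col 5 = (b₀ * d₁ - b₁ * d₀) • Pi.single 5 1 :=
    wedge_snd_snd b₀ b₁ d₀ d₁
  refine ⟨s, (hs.trans_ne hne).isUnit, fun A h2 h3 => ?_⟩
  obtain rfl | rfl | rfl | rfl : A = 0 ∨ A = 1 ∨ A = 4 ∨ A = 5 := by grind
  · exact ⟨_, by rw [h0, hs0, inv_smul_smul₀ (left_ne_zero_of_mul hne)]⟩
  · exact ⟨1, by rw [h1, one_smul]; rfl⟩
  · exact ⟨-1, by rw [h4, neg_one_smul]; exact wedge_swap _ _⟩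
  · exact ⟨_, by rw [h5, hs5, inv_smul_smul₀ (right_ne_zero_of_mul hne)]⟩

lemma IsWedgeSimilitude.isCompoundUpToDual_of_col_zero_five [NeZero (2 : K)]
    (hT : IsWedgeSimilitude T) (h0 : T.col 0 = Pi.single 0 1) (h5 : T.col 5 = Pi.single 5 1) :
    IsCompoundUpToDual T := by
  obtain ⟨s, hs, h⟩ := hT.exists_col_eq_smul_secondCompound_col h0 h5
  refine .of_inv_mul hs
    ((hT.secondCompound_inv_mul hs).isCompoundUpToDual_of_col_eq_smul_single fun A h2 h3 => ?_)
  obtain ⟨r, hr⟩ := h A h2 h3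
  exact ⟨r, col_secondCompound_inv_mul hs hr⟩

theorem IsWedgeSimilitude.isCompoundUpToDual [NeZero (2 : K)] (hT : IsWedgeSimilitude T) :
    IsCompoundUpToDual T := by
  obtain ⟨l, hl, h⟩ := hT.exists_sum_mul_rev
  obtain ⟨v, w, h0⟩ := exists_eq_wedge_of_pluckerForm_eq_zero (hT.pluckerForm_col 0)
  obtain ⟨x, y, h5⟩ := exists_eq_wedge_of_pluckerForm_eq_zero (hT.pluckerForm_col 5)
  let s : Matrix (Fin 4) (Fin 4) K := (Matrix.of ![v, w, x, y])ᵀ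
  have hs : IsUnit s.det := by
    rw [Matrix.det_transpose, ← wedge_dotProduct_wedge, ← h0, ← h5, dotProduct_wedgeGram_mulVec]
    exact (h 0 5).trans_ne hl |>.isUnit
  refine .of_inv_mul hs ((hT.secondCompound_inv_mul hs).isCompoundUpToDual_of_col_zero_five ?_ ?_)
  · simpa using col_secondCompound_inv_mul hs (h0.trans (one_smul K _).symm)
  · simpa using col_secondCompound_inv_mul hs (h5.trans (one_smul K _).symm)

end WedgeSimilitude

section BivectorForm

variable {G H : Fin 4 → Fin 4 → Fin 4 → Fin 4 → ℝ} {T : Matrix (Fin 6) (Fin 6) ℝ}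

/-- `G` is antisymmetric in each of its two index pairs, that is, it represents a bilinear form on
bivectors; the symmetry of that form is not assumed. -/
structure IsBivectorForm (G : Fin 4 → Fin 4 → Fin 4 → Fin 4 → ℝ) : Prop where
  antisymm_left (a b c d : Fin 4) : G a b c d = -G b a c d
  antisymm_right (a b c d : Fin 4) : G a b c d = -G a b d c

lemma IsBivectorForm.of_pairSymm (hsym : ∀ a b c d, G a b c d = G c d a b)
    (hasym : ∀ a b c d, G a b c d = -G b a c d) : IsBivectorForm G where
  antisymm_left := hasym
  antisymm_right a b c d := by rw [hsym, hasym, hsym]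

lemma bSgn_mul_apply_bIdx {f : Fin 4 → Fin 4 → ℝ} (hf : ∀ a b, f a b = -f b a) (a b : Fin 4) :
    bSgn a b * f (pFst (bIdx a b)) (pSnd (bIdx a b)) = f a b := by
  fin_cases a <;> fin_cases b <;> simp [bSgn, bIdx, pFst, pSnd] <;> grind

lemma IsBivectorForm.fromPetrov_petrov (hG : IsBivectorForm G) : fromPetrov (petrov G) = G := by
  ext a b c d
  calc fromPetrov (petrov G) a b c d
      = bSgn a b * (bSgn c d *
          G (pFst (bIdx a b)) (pSnd (bIdx a b)) (pFst (bIdx c d)) (pSnd (bIdx c d))) :=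
        mul_assoc _ _ _
    _ = bSgn a b * G (pFst (bIdx a b)) (pSnd (bIdx a b)) c d := by
        rw [bSgn_mul_apply_bIdx (hG.antisymm_right _ _)]
    _ = G a b c d :=
        bSgn_mul_apply_bIdx (f := fun a b => G a b c d) (fun a b => hG.antisymm_left a b c d) a b

lemma IsBivectorForm.ext_petrov (hG : IsBivectorForm G) (hH : IsBivectorForm H)
    (h : petrov G = petrov H) : G = H := by
  rw [← hG.fromPetrov_petrov, h, hH.fromPetrov_petrov]

lemma sum_mul_antisymm (g : Fin 4 → Fin 4 → ℝ) {f : Fin 4 → Fin 4 → ℝ}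
    (hf : ∀ m n, f m n = -f n m) :
    ∑ m, ∑ n, g m n * f m n =
      ∑ A, (g (pFst A) (pSnd A) - g (pSnd A) (pFst A)) * f (pFst A) (pSnd A) := by
  have hdiag (m : Fin 4) : f m m = 0 := self_eq_neg.mp (hf m m)
  simp only [Fin.sum_univ_four, Fin.sum_univ_six, pFst, pSnd, Matrix.cons_val, hdiag, hf 1 0,
    hf 2 0, hf 3 0, hf 2 1, hf 1 3, hf 3 2]
  ring

lemma IsBivectorForm.sum_mul_mul (hH : IsBivectorForm H) (g h : Fin 4 → Fin 4 → ℝ) :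
    ∑ m, ∑ n, ∑ p, ∑ q, g m n * h p q * H m n p q =
      ∑ A, ∑ B, (g (pFst A) (pSnd A) - g (pSnd A) (pFst A)) * petrov H A B *
        (h (pFst B) (pSnd B) - h (pSnd B) (pFst B)) := by
  calc ∑ m, ∑ n, ∑ p, ∑ q, g m n * h p q * H m n p q
      = ∑ m, ∑ n, g m n * ∑ p, ∑ q, h p q * H m n p q := by
        simp only [Finset.mul_sum, mul_assoc]
    _ = ∑ A, (g (pFst A) (pSnd A) - g (pSnd A) (pFst A)) *
          ∑ p, ∑ q, h p q * H (pFst A) (pSnd A) p q := by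
        refine sum_mul_antisymm g fun m n => ?_
        simp only [hH.antisymm_left m n, mul_neg, Finset.sum_neg_distrib]
    _ = ∑ A, (g (pFst A) (pSnd A) - g (pSnd A) (pFst A)) *
          ∑ B, (h (pFst B) (pSnd B) - h (pSnd B) (pFst B)) * petrov H A B := by
        simp only [sum_mul_antisymm h (hH.antisymm_right _ _)]
        rfl
    _ = _ := by
        simp only [Finset.mul_sum, mul_comm _ (petrov H _ _), mul_assoc, mul_left_comm]

/-- The pullback `t^m_a t^n_b t^p_c t^q_d H_{mnpq}` of a rank-4 covariant tensor along `t`. -/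
def pullbackTensor (t : Matrix (Fin 4) (Fin 4) ℝ) (H : Fin 4 → Fin 4 → Fin 4 → Fin 4 → ℝ)
    (a b c d : Fin 4) : ℝ :=
  ∑ m, ∑ n, ∑ p, ∑ q, t m a * t n b * t p c * t q d * H m n p q

lemma IsBivectorForm.pullbackTensor_apply (hH : IsBivectorForm H) (t : Matrix (Fin 4) (Fin 4) ℝ)
    (a b c d : Fin 4) :
    pullbackTensor t H a b c d =
      ∑ A, ∑ B, wedge (t.col a) (t.col b) A * petrov H A B * wedge (t.col c) (t.col d) B := by
  calc pullbackTensor t H a b c d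
      = ∑ m, ∑ n, ∑ p, ∑ q, t m a * t n b * (t p c * t q d) * H m n p q := by
        simp only [pullbackTensor, mul_assoc]
    _ = _ := hH.sum_mul_mul (fun m n => t m a * t n b) fun p q => t p c * t q d

lemma IsBivectorForm.petrov_pullbackTensor (hH : IsBivectorForm H)
    (t : Matrix (Fin 4) (Fin 4) ℝ) :
    petrov (pullbackTensor t H) = (secondCompound t)ᵀ * petrov H * secondCompound t := by
  ext A B
  rw [Matrix.mul_apply]
  simp only [Matrix.mul_apply, Finset.sum_mul]
  rw [Finset.sum_comm]
  exact hH.pullbackTensor_apply t _ _ _ _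

lemma IsBivectorForm.pullbackTensor (hH : IsBivectorForm H) (t : Matrix (Fin 4) (Fin 4) ℝ) :
    IsBivectorForm (pullbackTensor t H) where
  antisymm_left a b c d := by
    simp only [hH.pullbackTensor_apply, wedge_swap (t.col b) (t.col a), Pi.neg_apply, neg_mul,
      Finset.sum_neg_distrib]
  antisymm_right a b c d := by
    simp only [hH.pullbackTensor_apply, wedge_swap (t.col d) (t.col c), Pi.neg_apply, mul_neg,
      Finset.sum_neg_distrib]

lemma eps_eq_wedge_dotProduct_wedge (a b c d : Fin 4) :
    eps a b c d = wedge (Pi.single a 1) (Pi.single b 1) ⬝ᵥ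
      wedgeGram ℝ *ᵥ wedge (Pi.single c 1) (Pi.single d 1) := by
  rw [wedge_dotProduct_wedge, eps]
  congr 1
  ext i j
  fin_cases i <;> simp [Pi.single_apply, eq_comm]

lemma isBivectorForm_eps : IsBivectorForm eps where
  antisymm_left a b c d := by
    simp only [eps_eq_wedge_dotProduct_wedge, wedge_swap (Pi.single b (1 : ℝ)) (Pi.single a 1),
      neg_dotProduct]
  antisymm_right a b c d := by
    simp only [eps_eq_wedge_dotProduct_wedge, wedge_swap (Pi.single d (1 : ℝ)) (Pi.single c 1),
      Matrix.mulVec_neg, dotProduct_neg]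

lemma petrov_eps : petrov eps = wedgeGram ℝ := by
  ext A B
  simp [petrov, eps_eq_wedge_dotProduct_wedge, wedge_single]

lemma petrov_vol : petrov (vol G) = |(petrov G).det| ^ ((1 : ℝ) / 6) • wedgeGram ℝ := by
  rw [← petrov_eps]
  rfl

lemma isWedgeSimilitude_of_petrov_vol (hG : IsUnit (petrov G).det) (hH : IsUnit (petrov H).det)
    (hvol : petrov (vol G) = Tᵀ * petrov (vol H) * T) : IsWedgeSimilitude T := by
  have hpos {F : Fin 4 → Fin 4 → Fin 4 → Fin 4 → ℝ} (hF : IsUnit (petrov F).det) :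
      |(petrov F).det| ^ ((1 : ℝ) / 6) ≠ 0 :=
    (Real.rpow_pos_of_pos (abs_pos.mpr hF.ne_zero) _).ne'
  rw [petrov_vol, petrov_vol, Matrix.mul_smul, Matrix.smul_mul] at hvol
  refine ⟨_, mul_ne_zero (inv_ne_zero (hpos hH)) (hpos hG), ?_⟩
  rw [mul_smul, hvol, inv_smul_smul₀ (hpos hH)]

/-- The double dual `(1/4) ε_{mnij} ε_{pqlo} H_{ijlo}` of a rank-4 covariant tensor. -/
def doubleDual (H : Fin 4 → Fin 4 → Fin 4 → Fin 4 → ℝ) (m n p q : Fin 4) : ℝ :=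
  (1 / 4) * ∑ i, ∑ j, ∑ l, ∑ o, eps m n i j * eps p q l o * H i j l o

lemma isBivectorForm_doubleDual : IsBivectorForm (doubleDual H) where
  antisymm_left m n p q := by
    simp only [doubleDual, isBivectorForm_eps.antisymm_left m n, neg_mul, Finset.sum_neg_distrib,
      mul_neg]
  antisymm_right m n p q := by
    simp only [doubleDual, isBivectorForm_eps.antisymm_left p q, neg_mul, Finset.sum_neg_distrib,
      mul_neg]

lemma IsBivectorForm.petrov_doubleDual (hH : IsBivectorForm H) :
    petrov (doubleDual H) = wedgeGram ℝ * petrov H * wedgeGram ℝ := by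
  have halt (A C : Fin 6) : eps (pFst A) (pSnd A) (pFst C) (pSnd C) -
      eps (pFst A) (pSnd A) (pSnd C) (pFst C) = 2 * wedgeGram ℝ A C := by
    rw [isBivectorForm_eps.antisymm_right _ _ (pSnd C), sub_neg_eq_add, ← two_mul, ← petrov_eps]
    rfl
  ext A B
  calc petrov (doubleDual H) A B
      = (1 / 4) * ∑ C, ∑ D, 2 * wedgeGram ℝ A C * petrov H C D * (2 * wedgeGram ℝ B D) := by
        simp only [← halt]
        rw [← hH.sum_mul_mul]
        rfl
    _ = ∑ D, ∑ C, wedgeGram ℝ A C * petrov H C D * (wedgeGram ℝ)ᵀ D B := by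
        rw [Finset.sum_comm]
        simp only [Finset.mul_sum, Matrix.transpose_apply]
        congr! 2
        ring
    _ = (wedgeGram ℝ * petrov H * wedgeGram ℝ) A B := by
        simp only [wedgeGram_transpose, Matrix.mul_apply, Finset.sum_mul]

lemma smul_transpose_mul_mul_smul_secondCompound (c : ℝ) (t : Matrix (Fin 4) (Fin 4) ℝ)
    (M : Matrix (Fin 6) (Fin 6) ℝ) :
    (c • secondCompound t)ᵀ * M * (c • secondCompound t) =
      (secondCompound (√|c| • t))ᵀ * M * secondCompound (√|c| • t) := by
  rw [secondCompound_smul, Real.sq_sqrt (abs_nonneg c)]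
  simp only [Matrix.transpose_smul, Matrix.smul_mul, Matrix.mul_smul, smul_smul, abs_mul_abs_self]

theorem strong_equivalence_of_simultaneous_weak_equivalence_general
    (hG : IsBivectorForm G) (hH : IsBivectorForm H) (hT : IsWedgeSimilitude T)
    (hGH : petrov G = Tᵀ * petrov H * T) :
    ∃ t : Matrix (Fin 4) (Fin 4) ℝ, IsUnit t.det ∧
      ((∀ a b c d, G a b c d = pullbackTensor t H a b c d) ∨
        ∀ a b c d, G a b c d = pullbackTensor t (doubleDual H) a b c d) := by
  obtain ⟨c, hc, t, ht, hTt⟩ := hT.isCompoundUpToDual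
  have hdet : IsUnit (√|c| • t).det := by
    rw [Matrix.det_smul]
    exact (pow_ne_zero _ (Real.sqrt_ne_zero'.mpr (abs_pos.mpr hc))).isUnit.mul ht
  refine ⟨√|c| • t, hdet, ?_⟩
  rcases hTt with rfl | rfl
  · have h : G = pullbackTensor (√|c| • t) H := by
      refine hG.ext_petrov (hH.pullbackTensor _) ?_
      rw [hGH, hH.petrov_pullbackTensor, smul_transpose_mul_mul_smul_secondCompound]
    exact .inl fun a b c d => by rw [h]
  · have h : G = pullbackTensor (√|c| • t) (doubleDual H) := by
      refine hG.ext_petrov (isBivectorForm_doubleDual.pullbackTensor _) ?_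
      rw [hGH, isBivectorForm_doubleDual.petrov_pullbackTensor, hH.petrov_doubleDual,
        ← smul_transpose_mul_mul_smul_secondCompound, ← Matrix.mul_smul, Matrix.transpose_mul,
        wedgeGram_transpose]
      simp only [Matrix.mul_assoc]
    exact .inr fun a b c d => by rw [h]

end BivectorForm

/-- Theorem 3.1.  Let `G` and `H` be area metrics on `ℝ⁴` and suppose a
single invertible linear map `T` of `Λ²ℝ⁴` (represented in Petrov coordinates as a `6 × 6`
matrix) realizes the weak equivalences `Ĝ(x)(y) = Ĥ(Tx)(Ty)` and
`ω̂_G(x)(y) = ω̂_H(Tx)(Ty)` simultaneously.  Then there is `t ∈ GL(4,ℝ)` with either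
`G_{abcd} = t^m_a t^n_b t^p_c t^q_d H_{mnpq}` or
`G_{abcd} = t^m_a t^n_b t^p_c t^q_d H̃_{mnpq}`, where
`H̃_{mnpq} = (1/4) ε_{mnij} ε_{pqkl} H_{ijkl}`. -/
theorem strong_equivalence_of_simultaneous_weak_equivalence
    (G H : Fin 4 → Fin 4 → Fin 4 → Fin 4 → ℝ)
    (hsymG : ∀ a b c d, G a b c d = G c d a b)
    (hasymG : ∀ a b c d, G a b c d = - G b a c d)
    (hinvG : IsUnit (petrov G).det)
    (hsymH : ∀ a b c d, H a b c d = H c d a b)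
    (hasymH : ∀ a b c d, H a b c d = - H b a c d)
    (hinvH : IsUnit (petrov H).det)
    (T : Matrix (Fin 6) (Fin 6) ℝ) (hT : IsUnit T.det)
    (hGH : petrov G = T.transpose * petrov H * T)
    (hvol : petrov (vol G) = T.transpose * petrov (vol H) * T) :
    ∃ t : Matrix (Fin 4) (Fin 4) ℝ, IsUnit t.det ∧
      ((∀ a b c d, G a b c d =
          ∑ m : Fin 4, ∑ n : Fin 4, ∑ p : Fin 4, ∑ q : Fin 4,
            t m a * t n b * t p c * t q d * H m n p q) ∨
       (∀ a b c d, G a b c d =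
          ∑ m : Fin 4, ∑ n : Fin 4, ∑ p : Fin 4, ∑ q : Fin 4,
            t m a * t n b * t p c * t q d *
              ((1 / 4) * ∑ i : Fin 4, ∑ j : Fin 4, ∑ l : Fin 4, ∑ o : Fin 4,
                eps m n i j * eps p q l o * H i j l o))) := by
  exact strong_equivalence_of_simultaneous_weak_equivalence_general (.of_pairSymm hsymG hasymG)
    (.of_pairSymm hsymH hasymH) (isWedgeSimilitude_of_petrov_vol hinvG hinvH hvol) hGH

end
end
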